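/- arXiv:2401.05729 — 3 statements merged into one kernel-verified Lean document; each statement's English description precedes it below -/
import Mathlib

section
/- Let f : ℝ⁶ → ℂ be a Schwartz function satisfying f(−x, y) = f(x, −y) = f(x, y) for all (x,y) ∈ ℝ³×ℝ³. Let s₁, s₂, w ∈ ℂ with Re(s₁) > 1, Re(s₂) > 1 and Re(w) > 3. Then the integral Z(f, s₁, s₂, w) := ∫₀^∞∫₀^∞∫₀^∞∫₀¹∫₀¹ (μ²t²)^{s₁} (μ²s²)^{s₂} μ^{4w} ∑_{k=1}^{∞} ∑_{v ∈ kL'} k · f(h·v) du dv (dt/t³)(ds/s³)(dμ/μ) converges absolutely, and Z(f, s₁, s₂, w) = 4^{w} ξ₊(s₁,s₂,w) Φ₊(f,s₁,s₂,w) + 4^{w} ξ₋(s₁,s₂,w) Φ₋(f,s₁,s₂,w), where Φ±(f,s₁,s₂,w) := ∫_{(0,∞)³×ℝ²} (μ²t²)^{s₁} (μ²s²)^{s₂} μ^{4w} f(h·x±) du dv (dt/t³)(ds/s³)(dμ/μ). -/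
open MeasureTheory

noncomputable section

/-- `A m n` is the number of residue classes `x` modulo `m` with `x² ≡ n (mod m)`. -/
def A (m : ℕ) (n : ℤ) : ℕ := Nat.card {x : ZMod m // x ^ 2 = (n : ZMod m)}

/-- Action of the lower-triangular matrix `[[a,0],[c,d]]` on the coefficients
`(x₁,x₂,x₃)` of a binary quadratic form. -/
def rhoAct (a c d : ℝ) (x : ℝ × ℝ × ℝ) : ℝ × ℝ × ℝ :=
  (a ^ 2 * x.1, 2 * a * c * x.1 + a * d * x.2.1,
    c ^ 2 * x.1 + c * d * x.2.1 + d ^ 2 * x.2.2)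

/-- Parameters `(μ, t, s, u, v)` of the group `B⁺`. -/
abbrev Param : Type := ℝ × ℝ × ℝ × ℝ × ℝ

/-- The space `ℝ³ × ℝ³` of pairs of binary quadratic forms. -/
abbrev Vsp : Type := (ℝ × ℝ × ℝ) × (ℝ × ℝ × ℝ)

/-- The action of `h = (μ,t,s,u,v)`, via `g₁ = μ·[[t,0],[u/t,1/t]]`,
`g₂ = μ·[[s,0],[v/s,1/s]]`. -/
def act (p : Param) (q : Vsp) : Vsp :=
  (rhoAct (p.1 * p.2.1) (p.1 * p.2.2.2.1 / p.2.1) (p.1 / p.2.1) q.1,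
   rhoAct (p.1 * p.2.2.1) (p.1 * p.2.2.2.2 / p.2.2.1) (p.1 / p.2.2.1) q.2)

/-- The base point `x₊`. -/
def xplus : Vsp := ((1, 0, -1), (1, 0, -1))

/-- The base point `x₋`. -/
def xminus : Vsp := ((1, 0, 1), (1, 0, 1))

/-- The set `L'` of nonsingular integral points: equal discriminants and
`x₁·y₁·(x₂²−4x₁x₃) ≠ 0`. -/
def Lset : Set ((ℤ × ℤ × ℤ) × (ℤ × ℤ × ℤ)) :=
  {p | p.1.2.1 ^ 2 - 4 * p.1.1 * p.1.2.2 = p.2.2.1 ^ 2 - 4 * p.2.1 * p.2.2.2 ∧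
       p.1.1 * p.2.1 * (p.1.2.1 ^ 2 - 4 * p.1.1 * p.1.2.2) ≠ 0}

/-- Coercion of an integral point to `ℝ⁶`. -/
def toR (p : (ℤ × ℤ × ℤ) × (ℤ × ℤ × ℤ)) : Vsp :=
  (((p.1.1 : ℝ), (p.1.2.1 : ℝ), (p.1.2.2 : ℝ)),
   ((p.2.1 : ℝ), (p.2.2.1 : ℝ), (p.2.2.2 : ℝ)))

/-- The lattice sum `∑_{k≥1} ∑_{v ∈ kL'} k · f(h·v)`. -/
def latticeSum (f : Vsp → ℂ) (h : Param) : ℂ :=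
  ∑' (k : ℕ+) (x : Lset), (k : ℂ) *
    f (act h (toR ((k : ℤ) • (x : (ℤ × ℤ × ℤ) × (ℤ × ℤ × ℤ)))))

/-- Integrand of the zeta function `Z(f,s₁,s₂,w)`, including the Haar weight
`du dv (dt/t³)(ds/s³)(dμ/μ)`. -/
def Zintegrand (f : Vsp → ℂ) (s₁ s₂ w : ℂ) (p : Param) : ℂ :=
  ((p.1 ^ 2 * p.2.1 ^ 2 : ℝ) : ℂ) ^ s₁ * ((p.1 ^ 2 * p.2.2.1 ^ 2 : ℝ) : ℂ) ^ s₂ *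
    ((p.1 : ℝ) : ℂ) ^ (4 * w) * latticeSum f p *
    (((p.2.1 ^ 3 * p.2.2.1 ^ 3 * p.1)⁻¹ : ℝ) : ℂ)

/-- Integration domain: `μ, t, s ∈ (0,∞)`, `u, v ∈ (0,1]`. -/
def Zdomain : Set Param :=
  Set.Ioi 0 ×ˢ Set.Ioi 0 ×ˢ Set.Ioi 0 ×ˢ Set.Ioc 0 1 ×ˢ Set.Ioc 0 1

/-- The zeta function `Z(f, s₁, s₂, w)`. -/
def Zfun (f : Vsp → ℂ) (s₁ s₂ w : ℂ) : ℂ := ∫ p in Zdomain, Zintegrand f s₁ s₂ w p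

/-- Numerator `∑_{d²|D, d|m, d|n} d · A(4m/d, εD/d²) · A(4n/d, εD/d²)`. -/
def Anum (ε : ℤ) (D m n : ℕ) : ℕ :=
  ∑ d ∈ m.divisors.filter (fun d : ℕ => (d : ℤ) ^ 2 ∣ (D : ℤ) ∧ d ∣ n),
    d * A (4 * m / d) (ε * (D : ℤ) / (d : ℤ) ^ 2) * A (4 * n / d) (ε * (D : ℤ) / (d : ℤ) ^ 2)

/-- The multiple Dirichlet series `ξ_ε(s₁,s₂,w)`. -/
def xiMDS (ε : ℤ) (s₁ s₂ w : ℂ) : ℂ :=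
  ∑' q : ℕ × ℕ × ℕ,
    (Anum ε (q.1 + 1) (q.2.1 + 1) (q.2.2 + 1) : ℂ) /
      (((q.2.1 + 1 : ℕ) : ℂ) ^ s₁ * ((q.2.2 + 1 : ℕ) : ℂ) ^ s₂ * ((q.1 + 1 : ℕ) : ℂ) ^ w)

/-- Integration domain of the orbital integrals: `μ, t, s ∈ (0,∞)`, `u, v ∈ ℝ`. -/
def Phidomain : Set Param :=
  Set.Ioi 0 ×ˢ Set.Ioi 0 ×ˢ Set.Ioi 0 ×ˢ (Set.univ : Set (ℝ × ℝ))

/-- The orbital integral `Φ(f, s₁, s₂, w)` at the base point `x₀`. -/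
def PhiInt (f : Vsp → ℂ) (s₁ s₂ w : ℂ) (x₀ : Vsp) : ℂ :=
  ∫ p in Phidomain,
    ((p.1 ^ 2 * p.2.1 ^ 2 : ℝ) : ℂ) ^ s₁ * ((p.1 ^ 2 * p.2.2.1 ^ 2 : ℝ) : ℂ) ^ s₂ *
      ((p.1 : ℝ) : ℂ) ^ (4 * w) * f (act p x₀) *
      (((p.2.1 ^ 3 * p.2.2.1 ^ 3 * p.1)⁻¹ : ℝ) : ℂ)

/-!
The set `kL'` is a union of orbits of `ℤ²`, acting on pairs of integral binary quadratic forms by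
shears. Every orbit contains a unique pair of reduced forms, so the orbits in all the `kL'` together
correspond to `k`, `±D`, `±m`, `±n` and square roots of `±D` modulo `4m` and modulo `4n`. The shears
translate the strip `0 < u, v ≤ 1` over the whole `(u, v)`-plane, hence the sum over one orbit
unfolds `Z` to an integral over the full group `B⁺` of parameters. Up to the signs of the two forms,
which `f` ignores, that group acts transitively on the pairs of real forms with equal discriminant
of a given sign. By invariance of the measure the integral of an orbit is therefore `Φ±` times the
value `4^w (km)^{-s₁} (kn)^{-s₂} (k²D)^{-w}` of a quasicharacter, and summing over the orbits gives
`ξ±`. Sum and integral may be interchanged because the number of square roots modulo `N` is bounded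
by `∑_{de = N} gcd(d, e)`, and because the integrals `Φ±` converge absolutely.
-/

/-- The square roots of `D` modulo `N`; their number is `A N D`. -/
abbrev SqrtMod (N : ℕ) (D : ℤ) : Type := {x : ZMod N // x ^ 2 = (D : ZMod N)}

namespace SqrtMod

variable {N : ℕ} {D : ℤ}

theorem dvd_val_sq_sub [NeZero N] (a : SqrtMod N D) : (N : ℤ) ∣ (a.1.val : ℤ) ^ 2 - D := by
  rw [← ZMod.intCast_zmod_eq_zero_iff_dvd]
  push_cast
  rw [ZMod.natCast_zmod_val, a.2, sub_self]

theorem dvd_val_add_val [NeZero N] (a b : SqrtMod N D) {d e : ℕ} (hde : d * e = N)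
    (hd : Int.gcd N (a.1.val - b.1.val) = d) : (e : ℤ) ∣ a.1.val + b.1.val := by
  have hd0 : (d : ℤ) ≠ 0 := by
    rintro h
    exact NeZero.ne N (by simp [← hde, Int.natCast_eq_zero.1 h])
  have hmul : (N : ℤ) ∣ (a.1.val - b.1.val) * (a.1.val + b.1.val) := by
    rw [mul_comm, ← sq_sub_sq, ← sub_sub_sub_cancel_right _ _ D]
    exact dvd_sub a.dvd_val_sq_sub b.dvd_val_sq_sub
  rw [← Int.dvd_gcd_mul_iff_dvd_mul, hd, show (N : ℤ) = d * e by exact_mod_cast hde.symm] at hmul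
  exact Int.dvd_of_mul_dvd_mul_left hd0 hmul

end SqrtMod

theorem card_le_gcd_of_modEq {s : Finset ℕ} {d e : ℕ} (hlt : ∀ x ∈ s, x < d * e)
    (hd : ∀ x ∈ s, ∀ y ∈ s, x ≡ y [MOD d]) (he : ∀ x ∈ s, ∀ y ∈ s, x ≡ y [MOD e]) :
    s.card ≤ d.gcd e := by
  rcases s.eq_empty_or_nonempty with rfl | ⟨x₀, hx₀⟩
  · exact Nat.zero_le _
  have hlcm : 0 < d.lcm e := by
    have := (Nat.zero_le x₀).trans_lt (hlt x₀ hx₀)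
    exact Nat.lcm_pos (Nat.pos_of_mul_pos_right this) (Nat.pos_of_mul_pos_left this)
  rw [← Finset.card_range (d.gcd e)]
  refine Finset.card_le_card_of_injOn (· / d.lcm e) (fun x hx => ?_) fun x hx y hy hxy => ?_
  · rw [Finset.coe_range, Set.mem_Iio, Nat.div_lt_iff_lt_mul hlcm, Nat.gcd_mul_lcm]
    exact hlt x hx
  · have hmod : x ≡ y [MOD d.lcm e] :=
      Int.natCast_modEq_iff.1 <| Int.modEq_and_modEq_iff_modEq_lcm.1
        ⟨Int.natCast_modEq_iff.2 (hd x hx y hy), Int.natCast_modEq_iff.2 (he x hx y hy)⟩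
    rw [← Nat.div_add_mod x (d.lcm e), ← Nat.div_add_mod y (d.lcm e), hmod]
    exact congrArg (d.lcm e * · + y % d.lcm e) hxy

-- A square root `b` cuts the others up according to `d = gcd(N, a - b)`: as `N ∣ (a - b) (a + b)`,
-- all roots with the same `d` agree modulo `d` and modulo `N / d`.
theorem A_le_sum_gcd (N : ℕ) [NeZero N] (D : ℤ) :
    A N D ≤ ∑ q ∈ N.divisorsAntidiagonal, q.1.gcd q.2 := by
  rcases isEmpty_or_nonempty (SqrtMod N D) with h | ⟨⟨b⟩⟩
  · rw [show A N D = Nat.card (SqrtMod N D) from rfl, Nat.card_of_isEmpty]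
    exact Nat.zero_le _
  let gcdSub (a : SqrtMod N D) : ℕ := Int.gcd N (a.1.val - b.1.val)
  have gcdSub_dvd (a) : gcdSub a ∣ N := Int.natCast_dvd_natCast.1 (Int.gcd_dvd_left ..)
  have card_eq : A N D = (Finset.univ : Finset (SqrtMod N D)).card :=
    Nat.card_eq_fintype_card
  rw [card_eq, Finset.card_eq_sum_card_fiberwise (t := N.divisorsAntidiagonal)
    (f := fun a => (gcdSub a, N / gcdSub a))
    fun a _ => by simp [Nat.mul_div_cancel' (gcdSub_dvd a), NeZero.ne N]]
  refine Finset.sum_le_sum fun ⟨d, e⟩ hde => ?_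
  have hde : d * e = N := (Nat.mem_divisorsAntidiagonal.1 hde).1
  have val_injective : Function.Injective fun a : SqrtMod N D => a.1.val :=
    (ZMod.val_injective N).comp Subtype.val_injective
  rw [← Finset.card_map ⟨_, val_injective⟩]
  have gcdSub_eq {a} (ha : a ∈ Finset.univ.filter fun a => (gcdSub a, N / gcdSub a) = (d, e)) :
      gcdSub a = d := congrArg Prod.fst (Finset.mem_filter.1 ha).2
  apply card_le_gcd_of_modEq <;> simp only [Finset.forall_mem_map, Function.Embedding.coeFn_mk]
  · exact fun a _ => hde ▸ ZMod.val_lt a.1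
  · intro a ha a' ha'
    have dvd_sub_b {a} (h : gcdSub a = d) : (d : ℤ) ∣ a.1.val - b.1.val :=
      h ▸ Int.gcd_dvd_right ..
    rw [Nat.modEq_iff_dvd, ← sub_sub_sub_cancel_right _ _ (b.1.val : ℤ)]
    exact dvd_sub (dvd_sub_b (gcdSub_eq ha')) (dvd_sub_b (gcdSub_eq ha))
  · intro a ha a' ha'
    rw [Nat.modEq_iff_dvd, ← add_sub_add_right_eq_sub _ _ (b.1.val : ℤ)]
    exact dvd_sub (a'.dvd_val_add_val b hde (gcdSub_eq ha'))
      (a.dvd_val_add_val b hde (gcdSub_eq ha))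

section Summability

variable {σ : ℝ}

theorem summable_gcd_mul_rpow (hσ : 1 < σ) :
    Summable fun q : ℕ × ℕ => (q.1.gcd q.2 : ℝ) * ((q.1 : ℝ) * q.2) ^ (-σ) := by
  have hg : Summable fun g : ℕ => (g : ℝ) ^ (1 + (-σ + -σ)) :=
    Real.summable_nat_rpow.2 (by linarith)
  have ha : Summable fun a : ℕ => (a : ℝ) ^ (-σ) := Real.summable_nat_rpow.2 (by linarith)
  have hab := ha.mul_of_nonneg ha (fun _ => by positivity) fun _ => by positivity
  have hgab := hg.mul_of_nonneg hab (fun _ => by positivity) fun _ => by positivity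
  have split_injective : Function.Injective fun q : ℕ × ℕ =>
      (q.1.gcd q.2, q.1 / q.1.gcd q.2, q.2 / q.1.gcd q.2) := by
    rintro ⟨d, e⟩ ⟨d', e'⟩ h
    simp only [Prod.mk.injEq] at h ⊢
    exact ⟨(Nat.mul_div_cancel' (d.gcd_dvd_left e)).symm.trans <|
        (congrArg₂ (· * ·) h.1 h.2.1).trans (Nat.mul_div_cancel' (d'.gcd_dvd_left e')),
      (Nat.mul_div_cancel' (d.gcd_dvd_right e)).symm.trans <|
        (congrArg₂ (· * ·) h.1 h.2.2).trans (Nat.mul_div_cancel' (d'.gcd_dvd_right e'))⟩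
  refine (hgab.comp_injective split_injective).congr fun ⟨d, e⟩ => ?_
  have hd : (d.gcd e : ℝ) * (d / d.gcd e : ℕ) = d :=
    mod_cast Nat.mul_div_cancel' (d.gcd_dvd_left e)
  have he : (d.gcd e : ℝ) * (e / d.gcd e : ℕ) = e :=
    mod_cast Nat.mul_div_cancel' (d.gcd_dvd_right e)
  rw [← hd, ← he, Function.comp_apply, Real.mul_rpow (by positivity) (by positivity),
    Real.mul_rpow (by positivity) (by positivity), Real.mul_rpow (by positivity) (by positivity),
    Real.rpow_add' (by positivity) (by linarith), Real.rpow_add' (by positivity) (by linarith),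
    Real.rpow_one]
  ring

theorem summable_sum_gcd_mul_rpow (hσ : 1 < σ) :
    Summable fun N : ℕ+ =>
      ((∑ q ∈ (N : ℕ).divisorsAntidiagonal, q.1.gcd q.2 : ℕ) : ℝ) * (N : ℝ) ^ (-σ) := by
  have fst_mul_snd (x : Σ N : ℕ+, (N : ℕ).divisorsAntidiagonal) : x.2.1.1 * x.2.1.2 = x.1 :=
    (Nat.mem_divisorsAntidiagonal.1 x.2.2).1
  have pair_injective : Function.Injective
      fun x : Σ N : ℕ+, (N : ℕ).divisorsAntidiagonal => x.2.1 := by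
    rintro ⟨N, q, hq⟩ ⟨N', q', hq'⟩ (rfl : q = q')
    obtain rfl : N = N' :=
      PNat.coe_injective ((fst_mul_snd ⟨N, q, hq⟩).symm.trans (fst_mul_snd ⟨N', q, hq'⟩))
    rfl
  refine ((summable_gcd_mul_rpow hσ).comp_injective pair_injective).sigma.congr fun N => ?_
  rw [tsum_fintype, Nat.cast_sum, Finset.sum_mul,
    ← Finset.sum_coe_sort (N : ℕ).divisorsAntidiagonal]
  refine Finset.sum_congr rfl fun q _ => ?_
  rw [Function.comp_apply, ← Nat.cast_mul, fst_mul_snd]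

theorem summable_sum_gcd_four_mul_mul_rpow (hσ : 1 < σ) :
    Summable fun m : ℕ+ =>
      ((∑ q ∈ (4 * m : ℕ).divisorsAntidiagonal, q.1.gcd q.2 : ℕ) : ℝ) * (m : ℝ) ^ (-σ) := by
  have hinj : Function.Injective fun m : ℕ+ => 4 * m := fun _ _ => mul_left_cancel
  have hsum := (summable_sum_gcd_mul_rpow hσ).comp_injective hinj
  refine (hsum.mul_left (4 ^ σ)).congr fun m => ?_
  rw [Function.comp_apply, PNat.mul_coe, Nat.cast_mul,
    Real.mul_rpow (by positivity) (by positivity)]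
  simp [Real.rpow_neg]
  field_simp

end Summability

section Disc

variable {R : Type*} [CommRing R]

/-- The discriminant of the binary quadratic form with coefficients `x`. -/
def disc (x : R × R × R) : R := x.2.1 ^ 2 - 4 * x.1 * x.2.2

/-- The action of the unipotent matrix `[[1,0],[j,1]]` on the coefficients of a binary quadratic
form, as in `rhoAct` but over any ring. -/
def shear (j : R) (x : R × R × R) : R × R × R :=
  (x.1, x.2.1 + 2 * j * x.1, x.2.2 + j * x.2.1 + j ^ 2 * x.1)

theorem disc_shear (j : R) (x : R × R × R) : disc (shear j x) = disc x := by
  simp only [disc, shear]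
  ring

end Disc

section ReducedForms

/-- The leading coefficient `±m` of the reduced form attached to the residue `a` modulo `4m`. Its
sign tells the two residues modulo `4m` in a residue class modulo `2m` apart. -/
def lead (m : ℕ+) (a : ZMod (4 * m)) : ℤ := if (a.val : ℤ) < 2 * m then m else -m

variable {m : ℕ+} {D : ℤ}

theorem abs_lead (a : ZMod (4 * m)) : |lead m a| = m := by
  unfold lead
  split_ifs <;> simp

theorem lead_ne_zero (a : ZMod (4 * m)) : lead m a ≠ 0 := by
  rw [← abs_pos, abs_lead]
  exact mod_cast m.pos

/-- The form of discriminant `D` with middle coefficient `a` and leading coefficient `±m` attached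
to a square root `a` of `D` modulo `4m`. Every integral form of discriminant `D` with leading
coefficient `±m` is a shear of exactly one of these. -/
def reducedForm (a : SqrtMod (4 * m) D) : ℤ × ℤ × ℤ :=
  (lead m a.1, a.1.val, ((a.1.val : ℤ) ^ 2 - D) / (4 * lead m a.1))

theorem disc_reducedForm (a : SqrtMod (4 * m) D) : disc (reducedForm a) = D := by
  have hdvd : 4 * lead m a.1 ∣ (a.1.val : ℤ) ^ 2 - D := by
    rw [← abs_dvd, abs_mul, abs_lead]
    exact mod_cast a.dvd_val_sq_sub
  simp only [disc, reducedForm]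
  rw [Int.mul_ediv_cancel' hdvd, sub_sub_cancel]

theorem abs_val_sub_val_lt {a b : ZMod (4 * m)} (h : lead m a = lead m b) :
    |(a.val : ℤ) - b.val| < 2 * m := by
  have hm := m.pos
  have ha := a.val_lt
  have hb := b.val_lt
  unfold lead at h
  rw [abs_lt]
  split_ifs at h <;> omega

theorem shear_reducedForm_inj {a b : SqrtMod (4 * m) D} {j l : ℤ} :
    shear j (reducedForm a) = shear l (reducedForm b) ↔ a = b ∧ j = l := by
  refine ⟨fun h => ?_, by rintro ⟨rfl, rfl⟩; rfl⟩
  simp only [shear, reducedForm, Prod.mk.injEq] at h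
  obtain ⟨hlead, hmid, -⟩ := h
  rw [← hlead] at hmid
  have hdvd : 2 * (m : ℤ) ∣ a.1.val - b.1.val := by
    rw [← abs_lead a.1, ← abs_two, ← abs_mul, abs_dvd]
    exact ⟨l - j, by linarith⟩
  have hval : (a.1.val : ℤ) = b.1.val :=
    sub_eq_zero.1 (Int.eq_zero_of_abs_lt_dvd hdvd (abs_val_sub_val_lt hlead))
  refine ⟨Subtype.ext (ZMod.val_injective _ (mod_cast hval)), ?_⟩
  rw [hval, add_right_inj] at hmid
  exact mul_left_cancel₀ two_ne_zero (mul_right_cancel₀ (lead_ne_zero a.1) hmid)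

theorem exists_lead_eq (x₁ x₂ : ℤ) (hm : |x₁| = m) :
    ∃ (a : ZMod (4 * m)) (j : ℤ), lead m a = x₁ ∧ x₂ = a.val + 2 * j * x₁ := by
  have hm0 : (0 : ℤ) < m := mod_cast m.pos
  let c : ℤ := if 0 < x₁ then 0 else 2 * m
  let r : ℤ := toIcoMod (show (0 : ℤ) < 2 * m by positivity) c x₂
  have hr : c ≤ r ∧ r < c + 2 * m := toIcoMod_mem_Ico _ c x₂
  obtain ⟨n, hn⟩ : ∃ n : ℕ, r = n := Int.eq_ofNat_of_zero_le (by grind)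
  have hval : ((n : ZMod (4 * m)).val : ℤ) = r := by
    rw [ZMod.val_natCast_of_lt, hn]
    grind
  have hdvd : 2 * x₁ ∣ x₂ - r := by
    rw [← abs_dvd, abs_mul, hm, abs_two, self_sub_toIcoMod]
    exact Dvd.intro_left _ (zsmul_eq_mul ..).symm
  obtain ⟨j, hj⟩ := hdvd
  refine ⟨n, j, ?_, by rw [hval]; linarith⟩
  rw [lead, hval]
  grind

theorem exists_shear_reducedForm_eq (x : ℤ × ℤ × ℤ) (hm : |x.1| = m) (hD : disc x = D) :
    ∃ (a : SqrtMod (4 * m) D) (j : ℤ), shear j (reducedForm a) = x := by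
  obtain ⟨x₁, x₂, x₃⟩ := x
  obtain ⟨a, j, hlead, hmid⟩ := exists_lead_eq x₁ x₂ hm
  have hx₁ : x₁ ≠ 0 := hlead ▸ lead_ne_zero a
  have hsq : (a.val : ℤ) ^ 2 - D = 4 * x₁ * (x₃ - j * a.val - j ^ 2 * x₁) := by
    rw [← hD, disc, hmid]
    ring
  have hroot : a ^ 2 = (D : ZMod (4 * m)) := by
    have hdvd : ((4 * m : ℕ) : ℤ) ∣ (a.val : ℤ) ^ 2 - D := by
      rw [hsq, Nat.cast_mul, ← hm]
      exact (mul_dvd_mul_left _ (abs_dvd_self x₁)).mul_right _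
    simpa [sub_eq_zero] using (ZMod.intCast_zmod_eq_zero_iff_dvd _ _).2 hdvd
  refine ⟨⟨a, hroot⟩, j, ?_⟩
  simp only [shear, reducedForm, hlead, hmid, hsq]
  rw [Int.mul_ediv_cancel_left _ (mul_ne_zero four_ne_zero hx₁)]
  ext <;> ring

end ReducedForms

section Orbits

/-- The numerical invariants of a point `k • (x, y)` with `(x, y) ∈ Lset`: the scaling factor `k`,
the absolute value `D` of the common discriminant of `x` and `y`, and the absolute values `m` and
`n` of the leading coefficients of `x` and `y`. -/
structure OrbitType where
  k : ℕ+
  D : ℕ+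
  m : ℕ+
  n : ℕ+

/-- Representatives `k • (x, y)` of the orbits of `ℤ²`, acting by shears, on the pairs of `k : ℕ+`
and a point of `Lset`. The unit `ε` is the sign of the discriminant; the two square roots determine
the reduced forms `x` and `y`. -/
abbrev OrbitRep : Type :=
  Σ c : ℤˣ × OrbitType, SqrtMod (4 * c.2.m) (c.1 * c.2.D) × SqrtMod (4 * c.2.n) (c.1 * c.2.D)

/-- The pair of reduced forms attached to an orbit representative. -/
def OrbitRep.forms (r : OrbitRep) : (ℤ × ℤ × ℤ) × (ℤ × ℤ × ℤ) :=
  (reducedForm r.2.1, reducedForm r.2.2)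

/-- The action of `ℤ²` on pairs of integral binary quadratic forms by shears. -/
def shearPair (j : ℤ × ℤ) (x : (ℤ × ℤ × ℤ) × (ℤ × ℤ × ℤ)) : (ℤ × ℤ × ℤ) × (ℤ × ℤ × ℤ) :=
  (shear j.1 x.1, shear j.2 x.2)

theorem mk_mem_Lset {x y : ℤ × ℤ × ℤ} :
    (x, y) ∈ Lset ↔ disc x = disc y ∧ x.1 * y.1 * disc x ≠ 0 :=
  Iff.rfl

theorem shearPair_smul (j : ℤ × ℤ) (k : ℤ) (x : (ℤ × ℤ × ℤ) × (ℤ × ℤ × ℤ)) :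
    shearPair j (k • x) = k • shearPair j x := by
  ext <;> simp only [shearPair, shear, Prod.smul_fst, Prod.smul_snd, smul_eq_mul] <;> ring

theorem exists_abs_eq_pnat {a : ℤ} (ha : a ≠ 0) : ∃ m : ℕ+, |a| = m :=
  ⟨⟨a.natAbs, Int.natAbs_pos.2 ha⟩, Int.abs_eq_natAbs a⟩

theorem exists_eq_unit_mul_pnat {d : ℤ} (hd : d ≠ 0) : ∃ (ε : ℤˣ) (D : ℕ+), d = ε * D := by
  obtain ⟨D, hD⟩ := exists_abs_eq_pnat hd
  rcases abs_choice d with h | h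
  · exact ⟨1, D, by simp [← hD, h]⟩
  · exact ⟨-1, D, by simp [← hD, h]⟩

theorem unit_mul_pnat_inj {ε ε' : ℤˣ} {D D' : ℕ+} (h : (ε : ℤ) * D = ε' * D') :
    ε = ε' ∧ D = D' := by
  obtain rfl : D = D' := by simpa [Int.natAbs_mul] using congrArg Int.natAbs h
  exact ⟨Units.ext (mul_right_cancel₀ (mod_cast D.ne_zero) h), rfl⟩

theorem shearPair_forms_mem_Lset (r : OrbitRep) (j : ℤ × ℤ) : shearPair j r.forms ∈ Lset := by
  rw [shearPair, OrbitRep.forms, mk_mem_Lset, disc_shear, disc_shear, disc_reducedForm,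
    disc_reducedForm]
  refine ⟨rfl, mul_ne_zero (mul_ne_zero (lead_ne_zero _) (lead_ne_zero _)) ?_⟩
  exact mul_ne_zero r.1.1.ne_zero (mod_cast r.1.2.D.ne_zero)

/-- The scaling factor and the point of `Lset` obtained by shearing an orbit representative. -/
def orbitPoint (i : OrbitRep × (ℤ × ℤ)) : ℕ+ × Lset :=
  (i.1.1.2.k, ⟨shearPair i.2 i.1.forms, shearPair_forms_mem_Lset i.1 i.2⟩)

theorem orbitPoint_injective : Function.Injective orbitPoint := by
  rintro ⟨⟨⟨ε, k, D, m, n⟩, a, b⟩, j, l⟩ ⟨⟨⟨ε', k', D', m', n'⟩, a', b'⟩, j', l'⟩ h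
  obtain ⟨rfl, h⟩ := Prod.mk.inj h
  obtain ⟨hx, hy⟩ := Prod.mk.inj (Subtype.mk.inj h)
  dsimp only [OrbitRep.forms] at a b a' b' hx hy
  have hdisc := congrArg disc hx
  rw [disc_shear, disc_shear, disc_reducedForm, disc_reducedForm] at hdisc
  obtain ⟨rfl, rfl⟩ := unit_mul_pnat_inj hdisc
  have hm : m = m' := by
    simpa [shear, reducedForm, abs_lead] using congrArg (fun z => |z.1|) hx
  have hn : n = n' := by
    simpa [shear, reducedForm, abs_lead] using congrArg (fun z => |z.1|) hy
  subst hm hn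
  obtain ⟨rfl, rfl⟩ := shear_reducedForm_inj.1 hx
  obtain ⟨rfl, rfl⟩ := shear_reducedForm_inj.1 hy
  rfl

theorem orbitPoint_surjective : Function.Surjective orbitPoint := by
  rintro ⟨k, ⟨x, y⟩, hxy⟩
  obtain ⟨hdisc, hne⟩ := mk_mem_Lset.1 hxy
  obtain ⟨ε, D, hD⟩ := exists_eq_unit_mul_pnat (right_ne_zero_of_mul hne)
  obtain ⟨m, hm⟩ := exists_abs_eq_pnat (left_ne_zero_of_mul (left_ne_zero_of_mul hne))
  obtain ⟨n, hn⟩ := exists_abs_eq_pnat (right_ne_zero_of_mul (left_ne_zero_of_mul hne))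
  obtain ⟨a, j, rfl⟩ := exists_shear_reducedForm_eq x hm hD
  obtain ⟨b, l, rfl⟩ := exists_shear_reducedForm_eq y hn (hdisc ▸ hD)
  exact ⟨⟨⟨(ε, ⟨k, D, m, n⟩), a, b⟩, j, l⟩, rfl⟩

theorem orbitPoint_bijective : Function.Bijective orbitPoint :=
  ⟨orbitPoint_injective, orbitPoint_surjective⟩

end Orbits

section DirichletSeries

/-- The number of orbit representatives of type `c` whose discriminant has sign `ε`. -/
def OrbitType.mult (ε : ℤ) (c : OrbitType) : ℕ := A (4 * c.m) (ε * c.D) * A (4 * c.n) (ε * c.D)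

/-- The contribution `k (km)^{-s₁} (kn)^{-s₂} (k²D)^{-w}` of an orbit of type `c` to the Dirichlet
series. -/
def OrbitType.coeff (s₁ s₂ w : ℂ) (c : OrbitType) : ℂ :=
  c.k / (((c.k * c.m : ℕ) : ℂ) ^ s₁ * ((c.k * c.n : ℕ) : ℂ) ^ s₂ * ((c.k ^ 2 * c.D : ℕ) : ℂ) ^ w)

variable {s₁ s₂ w : ℂ}

theorem OrbitType.norm_coeff (s₁ s₂ w : ℂ) (c : OrbitType) :
    ‖c.coeff s₁ s₂ w‖ = (c.k : ℝ) ^ (1 - s₁.re - s₂.re - 2 * w.re) * ((c.D : ℝ) ^ (-w.re) *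
      ((c.m : ℝ) ^ (-s₁.re) * (c.n : ℝ) ^ (-s₂.re))) := by
  have hk : (0 : ℝ) < c.k := mod_cast c.k.pos
  have norm_cpow {a b : ℕ+} (s : ℂ) :
      ‖((a * b : ℕ) : ℂ) ^ s‖ = (a : ℝ) ^ s.re * (b : ℝ) ^ s.re := by
    rw [Complex.norm_natCast_cpow_of_pos (by positivity), Nat.cast_mul,
      Real.mul_rpow (by positivity) (by positivity)]
  have hk2 : ((c.k ^ 2 : ℕ+) : ℝ) ^ w.re = (c.k : ℝ) ^ (2 * w.re) := by
    rw [PNat.pow_coe, Nat.cast_pow, ← Real.rpow_natCast_mul hk.le, Nat.cast_two]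
  rw [OrbitType.coeff, ← PNat.pow_coe, norm_div, norm_mul, norm_mul, norm_cpow, norm_cpow,
    norm_cpow, hk2, Complex.norm_natCast, Real.rpow_sub hk, Real.rpow_sub hk, Real.rpow_sub hk,
    Real.rpow_one]
  simp only [Real.rpow_neg (Nat.cast_nonneg _)]
  field_simp

theorem OrbitType.summable_mult_mul_norm_coeff (ε : ℤ) (h₁ : 1 < s₁.re) (h₂ : 1 < s₂.re)
    (hw : 1 < w.re) : Summable fun c : OrbitType => c.mult ε * ‖c.coeff s₁ s₂ w‖ := by
  have summable_rpow {r : ℝ} (hr : r < -1) : Summable fun k : ℕ+ => (k : ℝ) ^ r :=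
    (Real.summable_nat_rpow.2 hr).comp_injective PNat.coe_injective
  have hk := summable_rpow (show 1 - s₁.re - s₂.re - 2 * w.re < -1 by linarith)
  have hD := summable_rpow (show -w.re < -1 by linarith)
  have hm := summable_sum_gcd_four_mul_mul_rpow h₁
  have hn := summable_sum_gcd_four_mul_mul_rpow h₂
  have hmn := hm.mul_of_nonneg hn (fun _ => by positivity) fun _ => by positivity
  have hDmn := hD.mul_of_nonneg hmn (fun _ => by positivity) fun _ => by positivity
  have hkDmn := hk.mul_of_nonneg hDmn (fun _ => by positivity) fun _ => by positivity
  have hinj : Function.Injective fun c : OrbitType => (c.k, c.D, c.m, c.n) := by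
    rintro ⟨⟩ ⟨⟩ h
    simpa using h
  refine (hkDmn.comp_injective hinj).of_nonneg_of_le (fun _ => by positivity) fun c => ?_
  have hmult := Nat.mul_le_mul (A_le_sum_gcd (4 * c.m) (ε * c.D)) (A_le_sum_gcd (4 * c.n) (ε * c.D))
  rw [c.norm_coeff]
  refine (mul_le_mul_of_nonneg_right (Nat.cast_le.2 hmult) (by positivity)).trans_eq ?_
  rw [Function.comp_apply, Nat.cast_mul]
  ring

/-- The index set of the inner sum in the definition of `Anum`, for `q = (D, m, n)`. -/
def sqDivisors (q : ℕ+ × ℕ+ × ℕ+) : Finset ℕ :=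
  (q.2.1 : ℕ).divisors.filter fun d : ℕ => (d : ℤ) ^ 2 ∣ ((q.1 : ℕ) : ℤ) ∧ d ∣ q.2.2

theorem coe_mem_sqDivisors {D m n d : ℕ+} :
    (d : ℕ) ∈ sqDivisors (D, m, n) ↔ d ∣ m ∧ d ^ 2 ∣ D ∧ d ∣ n := by
  rw [sqDivisors, Finset.mem_filter, Nat.mem_divisors, ← Nat.cast_pow, Int.natCast_dvd_natCast,
    ← PNat.pow_coe, PNat.dvd_iff, PNat.dvd_iff, PNat.dvd_iff]
  simp

/-- An orbit of type `(k, D, m, n)` contributes to the coefficient of `ξ` at `(k²D, km, kn)`, namely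
to its summand `d = k`. -/
def OrbitType.toSigma (c : OrbitType) : Σ q : ℕ+ × ℕ+ × ℕ+, sqDivisors q :=
  ⟨(c.k ^ 2 * c.D, c.k * c.m, c.k * c.n), c.k, coe_mem_sqDivisors.2 (by simp)⟩

theorem OrbitType.toSigma_bijective : Function.Bijective OrbitType.toSigma := by
  constructor
  · rintro ⟨k, D, m, n⟩ ⟨k', D', m', n'⟩ h
    obtain rfl : k = k' := PNat.coe_injective (congrArg (fun z => (z.2 : ℕ)) h)
    have h := congrArg Sigma.fst h
    simp only [OrbitType.toSigma, Prod.mk.injEq, mul_right_inj] at h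
    obtain ⟨rfl, rfl, rfl⟩ := h
    rfl
  · rintro ⟨⟨D, m, n⟩, d, hd⟩
    lift d to ℕ+ using Nat.pos_of_mem_divisors (Finset.mem_filter.1 hd).1
    obtain ⟨⟨m', rfl⟩, ⟨D', rfl⟩, ⟨n', rfl⟩⟩ := coe_mem_sqDivisors.1 hd
    exact ⟨⟨d, D', m', n'⟩, rfl⟩

/-- The summand of `ξ_ε` with index `d` in the coefficient at `q = (D, m, n)`. -/
def xiTerm (ε : ℤ) (s₁ s₂ w : ℂ) (q : ℕ+ × ℕ+ × ℕ+) (d : ℕ) : ℂ :=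
  ((d * A (4 * q.2.1 / d) (ε * (q.1 : ℤ) / (d : ℤ) ^ 2) *
      A (4 * q.2.2 / d) (ε * (q.1 : ℤ) / (d : ℤ) ^ 2) : ℕ) : ℂ) /
    (((q.2.1 : ℕ) : ℂ) ^ s₁ * ((q.2.2 : ℕ) : ℂ) ^ s₂ * ((q.1 : ℕ) : ℂ) ^ w)

theorem tsum_sum_xiTerm (ε : ℤ) (s₁ s₂ w : ℂ) :
    ∑' q, ∑ d ∈ sqDivisors q, xiTerm ε s₁ s₂ w q d = xiMDS ε s₁ s₂ w := by
  rw [xiMDS, ← (Equiv.pnatEquivNat.symm.prodCongr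
    (Equiv.pnatEquivNat.symm.prodCongr Equiv.pnatEquivNat.symm)).tsum_eq]
  refine tsum_congr fun q => ?_
  simp only [xiTerm, ← Finset.sum_div, ← Nat.cast_sum]
  rfl

theorem OrbitType.mult_mul_coeff (ε : ℤ) (s₁ s₂ w : ℂ) (c : OrbitType) :
    c.mult ε * c.coeff s₁ s₂ w = xiTerm ε s₁ s₂ w c.toSigma.1 c.toSigma.2 := by
  have div_k (a : ℕ+) : 4 * ((c.k * a : ℕ+) : ℕ) / c.k = 4 * a := by
    rw [PNat.mul_coe, mul_left_comm, Nat.mul_div_cancel_left _ c.k.pos]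
  have div_sq : ε * ((c.k ^ 2 * c.D : ℕ+) : ℤ) / (c.k : ℤ) ^ 2 = ε * c.D := by
    have hk : (c.k : ℤ) ^ 2 ≠ 0 := pow_ne_zero 2 (mod_cast c.k.ne_zero)
    rw [PNat.mul_coe, Nat.cast_mul, PNat.pow_coe, Nat.cast_pow, mul_left_comm,
      Int.mul_ediv_cancel_left _ hk]
  simp only [xiTerm, OrbitType.toSigma, div_k, div_sq, OrbitType.mult, OrbitType.coeff]
  push_cast
  ring

theorem OrbitType.tsum_mult_mul_coeff (ε : ℤ) (h₁ : 1 < s₁.re) (h₂ : 1 < s₂.re) (hw : 1 < w.re) :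
    ∑' c : OrbitType, c.mult ε * c.coeff s₁ s₂ w = xiMDS ε s₁ s₂ w := by
  let e := Equiv.ofBijective _ OrbitType.toSigma_bijective
  have hsum : Summable fun z : Σ q : ℕ+ × ℕ+ × ℕ+, sqDivisors q =>
      xiTerm ε s₁ s₂ w z.1 z.2 := by
    refine e.summable_iff.1 (.of_norm ?_)
    refine (OrbitType.summable_mult_mul_norm_coeff ε h₁ h₂ hw).congr fun c => ?_
    rw [← Complex.norm_natCast, ← norm_mul, c.mult_mul_coeff]
    rfl
  rw [tsum_congr (OrbitType.mult_mul_coeff ε s₁ s₂ w), ← tsum_sum_xiTerm]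
  refine (e.tsum_eq fun z => xiTerm ε s₁ s₂ w z.1 z.2).trans (hsum.tsum_sigma.trans ?_)
  exact tsum_congr fun q => Finset.tsum_subtype _ (xiTerm ε s₁ s₂ w q)

end DirichletSeries

section ParamMul

/-- The composition law of parameters: `act (paramMul h p) = act p ∘ act h`. -/
def paramMul (h p : Param) : Param :=
  (h.1 * p.1, h.2.1 * p.2.1, h.2.2.1 * p.2.2.1, h.2.1 ^ 2 * p.2.2.2.1 + h.2.2.2.1,
    h.2.2.1 ^ 2 * p.2.2.2.2 + h.2.2.2.2)

/-- The density of the measure `du dv (dt/t³)(ds/s³)(dμ/μ)` with respect to Lebesgue measure. -/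
def density (p : Param) : ℝ := (p.2.1 ^ 3 * p.2.2.1 ^ 3 * p.1)⁻¹

variable {h p : Param}

theorem mem_Phidomain : p ∈ Phidomain ↔ 0 < p.1 ∧ 0 < p.2.1 ∧ 0 < p.2.2.1 := by
  simp [Phidomain]

theorem measurableSet_Phidomain : MeasurableSet Phidomain :=
  measurableSet_Ioi.prod (measurableSet_Ioi.prod (measurableSet_Ioi.prod .univ))

theorem density_pos (hp : p ∈ Phidomain) : 0 < density p := by
  obtain ⟨_, _, _⟩ := mem_Phidomain.1 hp
  unfold density
  positivity

theorem density_paramMul (h p : Param) : density (paramMul h p) = density h * density p := by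
  simp only [density, paramMul, ← mul_inv]
  ring

theorem act_paramMul (hh : h ∈ Phidomain) (hp : p ∈ Phidomain) (x : Vsp) :
    act (paramMul h p) x = act p (act h x) := by
  obtain ⟨h₁, h₂, h₃⟩ := mem_Phidomain.1 hh
  obtain ⟨p₁, p₂, p₃⟩ := mem_Phidomain.1 hp
  simp only [act, paramMul, rhoAct]
  ext <;> simp only <;> field

theorem preimage_paramMul_Phidomain (hh : h ∈ Phidomain) :
    paramMul h ⁻¹' Phidomain = Phidomain := by
  obtain ⟨h₁, h₂, h₃⟩ := mem_Phidomain.1 hh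
  ext p
  simp [mem_Phidomain, paramMul, mul_pos_iff_of_pos_left, h₁, h₂, h₃]

theorem measurableEmbedding_mul_add {c : ℝ} (hc : c ≠ 0) (e : ℝ) :
    MeasurableEmbedding fun x => c * x + e :=
  (measurableEmbedding_addRight e).comp (measurableEmbedding_mulLeft₀ hc)

theorem measurableEmbedding_paramMul (hh : h ∈ Phidomain) : MeasurableEmbedding (paramMul h) := by
  obtain ⟨h₁, h₂, h₃⟩ := mem_Phidomain.1 hh
  exact (measurableEmbedding_mulLeft₀ h₁.ne').prodMap <|
    (measurableEmbedding_mulLeft₀ h₂.ne').prodMap <|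
    (measurableEmbedding_mulLeft₀ h₃.ne').prodMap <|
    (measurableEmbedding_mul_add (by positivity) _).prodMap
      (measurableEmbedding_mul_add (by positivity) _)

theorem map_mul_left_volume {c : ℝ} (hc : 0 < c) :
    Measure.map (fun x => c * x) volume = ENNReal.ofReal c⁻¹ • (volume : Measure ℝ) := by
  rw [Real.map_volume_mul_left hc.ne', abs_of_pos (inv_pos.2 hc)]

theorem map_mul_add_volume {c : ℝ} (hc : 0 < c) (e : ℝ) :
    Measure.map (fun x => c * x + e) volume = ENNReal.ofReal c⁻¹ • (volume : Measure ℝ) := by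
  have hcomp : (fun x => c * x + e) = (fun x => x + e) ∘ fun x => c * x := rfl
  rw [hcomp, ← Measure.map_map (by fun_prop) (by fun_prop), map_mul_left_volume hc,
    Measure.map_smul, (measurePreserving_add_right volume e).map_eq]

theorem map_prodMap_of_map_eq_smul {α β : Type*} [MeasureSpace α] [MeasureSpace β]
    [SFinite (volume : Measure α)] [SFinite (volume : Measure β)] {f : α → α} {g : β → β}
    {a b : ℝ} (ha : 0 ≤ a) (hfm : Measurable f) (hgm : Measurable g)
    (hf : Measure.map f volume = ENNReal.ofReal a • volume)
    (hg : Measure.map g volume = ENNReal.ofReal b • volume) :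
    Measure.map (Prod.map f g) volume = ENNReal.ofReal (a * b) • (volume : Measure (α × β)) := by
  rw [Measure.volume_eq_prod, ← Measure.map_prod_map _ _ hfm hgm, hf, hg, Measure.prod_smul_left,
    Measure.prod_smul_right, smul_smul, ← ENNReal.ofReal_mul ha]

theorem map_paramMul_volume (hh : h ∈ Phidomain) :
    Measure.map (paramMul h) volume = ENNReal.ofReal (density h) • (volume : Measure Param) := by
  obtain ⟨h₁, h₂, h₃⟩ := mem_Phidomain.1 hh
  have huv := map_prodMap_of_map_eq_smul (by positivity) (by fun_prop) (by fun_prop)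
    (map_mul_add_volume (pow_pos h₂ 2) h.2.2.2.1) (map_mul_add_volume (pow_pos h₃ 2) h.2.2.2.2)
  have hsuv := map_prodMap_of_map_eq_smul (by positivity) (by fun_prop) (by fun_prop)
    (map_mul_left_volume h₃) huv
  have htsuv := map_prodMap_of_map_eq_smul (by positivity) (by fun_prop) (by fun_prop)
    (map_mul_left_volume h₂) hsuv
  have hall := map_prodMap_of_map_eq_smul (by positivity) (by fun_prop) (by fun_prop)
    (map_mul_left_volume h₁) htsuv
  have hdensity : density h =
      h.1⁻¹ * (h.2.1⁻¹ * (h.2.2.1⁻¹ * ((h.2.1 ^ 2)⁻¹ * (h.2.2.1 ^ 2)⁻¹))) := by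
    rw [density]
    field_simp
  rw [hdensity]
  exact hall

variable {E : Type*} [NormedAddCommGroup E] {G : Param → E}

theorem integrableOn_comp_paramMul (hh : h ∈ Phidomain) (hG : IntegrableOn G Phidomain) :
    IntegrableOn (G ∘ paramMul h) Phidomain := by
  nth_rw 1 [← preimage_paramMul_Phidomain hh]
  rw [← (measurableEmbedding_paramMul hh).integrableOn_map_iff, map_paramMul_volume hh,
    IntegrableOn, Measure.restrict_smul]
  exact hG.smul_measure ENNReal.ofReal_ne_top

theorem setIntegral_comp_paramMul [NormedSpace ℝ E] (hh : h ∈ Phidomain) (G : Param → E) :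
    ∫ p in Phidomain, G (paramMul h p) = density h • ∫ p in Phidomain, G p := by
  nth_rw 1 [← preimage_paramMul_Phidomain hh]
  rw [← (measurableEmbedding_paramMul hh).setIntegral_map, map_paramMul_volume hh,
    Measure.restrict_smul, integral_smul_measure, ENNReal.toReal_ofReal (density_pos hh).le]

end ParamMul

section OrbitalIntegrals

/-- The quasicharacter `(μ²t²)^{s₁} (μ²s²)^{s₂} μ^{4w}` of the group of parameters. -/
def quasiChar (s₁ s₂ w : ℂ) (p : Param) : ℂ :=
  ((p.1 ^ 2 * p.2.1 ^ 2 : ℝ) : ℂ) ^ s₁ * ((p.1 ^ 2 * p.2.2.1 ^ 2 : ℝ) : ℂ) ^ s₂ *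
    ((p.1 : ℝ) : ℂ) ^ (4 * w)

/-- The integrand of the orbital integral `PhiInt f s₁ s₂ w x`. -/
def orbitalIntegrand (f : Vsp → ℂ) (s₁ s₂ w : ℂ) (x : Vsp) (p : Param) : ℂ :=
  quasiChar s₁ s₂ w p * f (act p x) * (density p : ℂ)

/-- The base point `x₊` for `ε = 1` and `x₋` for `ε = -1`. -/
def basePoint (ε : ℤˣ) : Vsp := ((1, 0, -((ε : ℤ) : ℝ)), (1, 0, -((ε : ℤ) : ℝ)))

/-- The symmetry hypothesis on a test function: it is even in each of the two forms. -/
def IsEven (f : Vsp → ℂ) : Prop :=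
  ∀ x y : ℝ × ℝ × ℝ, f (-x, y) = f (x, y) ∧ f (x, -y) = f (x, y)

variable {f : Vsp → ℂ} {s₁ s₂ w : ℂ} {h p : Param} {x y : ℝ × ℝ × ℝ}

theorem basePoint_one : basePoint 1 = xplus := by simp [basePoint, xplus]

theorem basePoint_neg_one : basePoint (-1) = xminus := by simp [basePoint, xminus]

theorem PhiInt_eq (f : Vsp → ℂ) (s₁ s₂ w : ℂ) (z : Vsp) :
    PhiInt f s₁ s₂ w z = ∫ p in Phidomain, orbitalIntegrand f s₁ s₂ w z p :=
  rfl

theorem ofReal_mul_cpow {a b : ℝ} (ha : 0 ≤ a) (hb : 0 ≤ b) (s : ℂ) :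
    ((a * b : ℝ) : ℂ) ^ s = (a : ℂ) ^ s * (b : ℂ) ^ s := by
  rw [Complex.ofReal_mul, Complex.mul_cpow_ofReal_nonneg ha hb]

theorem quasiChar_paramMul (hh : h ∈ Phidomain) (hp : p ∈ Phidomain) :
    quasiChar s₁ s₂ w (paramMul h p) = quasiChar s₁ s₂ w h * quasiChar s₁ s₂ w p := by
  obtain ⟨h₁, h₂, h₃⟩ := mem_Phidomain.1 hh
  obtain ⟨p₁, p₂, p₃⟩ := mem_Phidomain.1 hp
  have hsq (a b c d : ℝ) : (a * b) ^ 2 * (c * d) ^ 2 = a ^ 2 * c ^ 2 * (b ^ 2 * d ^ 2) := by ring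
  simp only [quasiChar, paramMul, hsq]
  rw [ofReal_mul_cpow (a := h.1 ^ 2 * h.2.1 ^ 2) (by positivity) (by positivity),
    ofReal_mul_cpow (a := h.1 ^ 2 * h.2.2.1 ^ 2) (by positivity) (by positivity),
    ofReal_mul_cpow h₁.le p₁.le]
  ring

theorem norm_quasiChar (hp : p ∈ Phidomain) : ‖quasiChar s₁ s₂ w p‖ =
    (p.1 ^ 2 * p.2.1 ^ 2) ^ s₁.re * (p.1 ^ 2 * p.2.2.1 ^ 2) ^ s₂.re * p.1 ^ (4 * w.re) := by
  obtain ⟨p₁, p₂, p₃⟩ := mem_Phidomain.1 hp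
  rw [quasiChar, norm_mul, norm_mul, Complex.norm_cpow_eq_rpow_re_of_pos (by positivity),
    Complex.norm_cpow_eq_rpow_re_of_pos (by positivity), Complex.norm_cpow_eq_rpow_re_of_pos p₁,
    show (4 * w).re = 4 * w.re by simp]

theorem quasiChar_ne_zero (hp : p ∈ Phidomain) : quasiChar s₁ s₂ w p ≠ 0 := by
  obtain ⟨p₁, p₂, p₃⟩ := mem_Phidomain.1 hp
  rw [← norm_pos_iff, norm_quasiChar hp]
  positivity

theorem quasiChar_of_re (hp : p ∈ Phidomain) :
    quasiChar s₁.re s₂.re w.re p = (‖quasiChar s₁ s₂ w p‖ : ℂ) := by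
  obtain ⟨p₁, p₂, p₃⟩ := mem_Phidomain.1 hp
  rw [norm_quasiChar hp, quasiChar, Complex.ofReal_mul (_ * _), Complex.ofReal_mul (_ ^ s₁.re),
    Complex.ofReal_cpow (by positivity), Complex.ofReal_cpow (by positivity),
    Complex.ofReal_cpow p₁.le, Complex.ofReal_mul 4, Complex.ofReal_ofNat]

theorem norm_orbitalIntegrand (hp : p ∈ Phidomain) (z : Vsp) :
    (‖orbitalIntegrand f s₁ s₂ w z p‖ : ℂ) =
      orbitalIntegrand (fun z => (‖f z‖ : ℂ)) s₁.re s₂.re w.re z p := by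
  rw [orbitalIntegrand, orbitalIntegrand, quasiChar_of_re hp, norm_mul, norm_mul, Complex.norm_real,
    Real.norm_of_nonneg (density_pos hp).le]
  push_cast
  rfl

theorem orbitalIntegrand_paramMul (hh : h ∈ Phidomain) (hp : p ∈ Phidomain) (z : Vsp) :
    orbitalIntegrand f s₁ s₂ w z (paramMul h p) =
      quasiChar s₁ s₂ w h * density h * orbitalIntegrand f s₁ s₂ w (act h z) p := by
  rw [orbitalIntegrand, orbitalIntegrand, quasiChar_paramMul hh hp, density_paramMul,
    act_paramMul hh hp]
  push_cast
  ring

theorem integrableOn_orbitalIntegrand_act (hh : h ∈ Phidomain) {z : Vsp}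
    (hz : IntegrableOn (orbitalIntegrand f s₁ s₂ w z) Phidomain) :
    IntegrableOn (orbitalIntegrand f s₁ s₂ w (act h z)) Phidomain := by
  have hne : quasiChar s₁ s₂ w h * density h ≠ 0 :=
    mul_ne_zero (quasiChar_ne_zero hh) (mod_cast (density_pos hh).ne')
  have hint : IntegrableOn (fun p => (quasiChar s₁ s₂ w h * density h)⁻¹ *
      (orbitalIntegrand f s₁ s₂ w z ∘ paramMul h) p) Phidomain :=
    (integrableOn_comp_paramMul hh hz).const_mul _
  refine hint.congr_fun (fun p hp => ?_) measurableSet_Phidomain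
  simp only [Function.comp_apply]
  rw [orbitalIntegrand_paramMul hh hp, inv_mul_cancel_left₀ hne]

theorem quasiChar_mul_PhiInt_act (hh : h ∈ Phidomain) (z : Vsp) :
    quasiChar s₁ s₂ w h * PhiInt f s₁ s₂ w (act h z) = PhiInt f s₁ s₂ w z := by
  have hdensity : (density h : ℂ) ≠ 0 := mod_cast (density_pos hh).ne'
  refine mul_left_cancel₀ hdensity ?_
  calc (density h : ℂ) * (quasiChar s₁ s₂ w h * PhiInt f s₁ s₂ w (act h z))
      = ∫ p in Phidomain, quasiChar s₁ s₂ w h * density h *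
          orbitalIntegrand f s₁ s₂ w (act h z) p := by
        rw [integral_const_mul, PhiInt_eq]
        ring
    _ = ∫ p in Phidomain, orbitalIntegrand f s₁ s₂ w z (paramMul h p) :=
        (setIntegral_congr_fun measurableSet_Phidomain fun p hp =>
          orbitalIntegrand_paramMul hh hp z).symm
    _ = density h * PhiInt f s₁ s₂ w z := by
        rw [setIntegral_comp_paramMul hh, Complex.real_smul, PhiInt_eq]

theorem exists_pos_pow_four_eq {a : ℝ} (ha : 0 < a) : ∃ μ : ℝ, 0 < μ ∧ μ ^ 4 = a :=
  ⟨a ^ (4⁻¹ : ℝ), by positivity, by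
    rw [← Real.rpow_natCast, ← Real.rpow_mul ha.le]
    norm_num⟩

theorem exists_act_basePoint_eq {ε : ℤˣ} {Δ : ℝ} (hΔ : 0 < Δ) (hx : 0 < x.1) (hy : 0 < y.1)
    (hdx : disc x = (ε : ℤ) * Δ) (hdy : disc y = (ε : ℤ) * Δ) :
    ∃ h ∈ Phidomain, act h (basePoint ε) = (x, y) ∧ ∀ s₁ s₂ w,
      quasiChar s₁ s₂ w h = (x.1 : ℂ) ^ s₁ * (y.1 : ℂ) ^ s₂ * ((Δ / 4 : ℝ) : ℂ) ^ w := by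
  obtain ⟨x₁, x₂, x₃⟩ := x
  obtain ⟨y₁, y₂, y₃⟩ := y
  simp only [disc] at hx hy hdx hdy
  obtain ⟨μ, hμ, hμ4⟩ := exists_pos_pow_four_eq (show 0 < Δ / 4 by positivity)
  obtain ⟨a, ha, rfl⟩ : ∃ a : ℝ, 0 < a ∧ a ^ 2 = x₁ := ⟨√x₁, by positivity, Real.sq_sqrt hx.le⟩
  obtain ⟨b, hb, rfl⟩ : ∃ b : ℝ, 0 < b ∧ b ^ 2 = y₁ := ⟨√y₁, by positivity, Real.sq_sqrt hy.le⟩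
  obtain rfl : Δ = 4 * μ ^ 4 := by linarith
  refine ⟨(μ, a / μ, b / μ, x₂ / (2 * μ ^ 2), y₂ / (2 * μ ^ 2)),
    mem_Phidomain.2 ⟨hμ, div_pos ha hμ, div_pos hb hμ⟩, ?_, fun s₁ s₂ w => ?_⟩
  · simp only [act, rhoAct, basePoint]
    ext <;> simp only <;> field_simp <;> linarith
  · have hμw : (μ : ℂ) ^ (4 * w) = ((μ ^ 4 : ℝ) : ℂ) ^ w := by
      have harg : (μ : ℂ).arg = 0 := Complex.arg_ofReal_of_nonneg hμ.le
      rw [Complex.ofReal_pow, Complex.cpow_ofNat_mul'] <;> simp [harg, Real.pi_pos, Real.pi_pos.le]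
    have hcancel (c : ℝ) : μ ^ 2 * (c / μ) ^ 2 = c ^ 2 := by field_simp
    rw [quasiChar, hcancel, hcancel, hμw, ← hμ4]

theorem rhoAct_neg (a c d : ℝ) (x : ℝ × ℝ × ℝ) : rhoAct a c d (-x) = -rhoAct a c d x := by
  ext <;> simp only [rhoAct, Prod.fst_neg, Prod.snd_neg, Prod.neg_mk] <;> ring

theorem orbitalIntegrand_neg_left (hf : IsEven f) (x y : ℝ × ℝ × ℝ) :
    orbitalIntegrand f s₁ s₂ w (-x, y) = orbitalIntegrand f s₁ s₂ w (x, y) := by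
  funext p
  simp only [orbitalIntegrand, act, rhoAct_neg, (hf _ _).1]

theorem orbitalIntegrand_neg_right (hf : IsEven f) (x y : ℝ × ℝ × ℝ) :
    orbitalIntegrand f s₁ s₂ w (x, -y) = orbitalIntegrand f s₁ s₂ w (x, y) := by
  funext p
  simp only [orbitalIntegrand, act, rhoAct_neg, (hf _ _).2]

theorem disc_neg {R : Type*} [CommRing R] (x : R × R × R) : disc (-x) = disc x := by
  simp [disc]

theorem exists_orbitalIntegrand_eq (hf : IsEven f) {ε : ℤˣ} {Δ : ℝ} (hΔ : 0 < Δ) (hx : x.1 ≠ 0)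
    (hy : y.1 ≠ 0) (hdx : disc x = (ε : ℤ) * Δ) (hdy : disc y = (ε : ℤ) * Δ) :
    ∃ h ∈ Phidomain,
      orbitalIntegrand f s₁ s₂ w (act h (basePoint ε)) = orbitalIntegrand f s₁ s₂ w (x, y) ∧
      quasiChar s₁ s₂ w h =
        ((|x.1| : ℝ) : ℂ) ^ s₁ * ((|y.1| : ℝ) : ℂ) ^ s₂ * ((Δ / 4 : ℝ) : ℂ) ^ w := by
  wlog hx₀ : 0 < x.1 generalizing x
  · simpa only [Prod.fst_neg, abs_neg, orbitalIntegrand_neg_left hf] using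
      this (x := -x) (neg_ne_zero.2 hx) (by rwa [disc_neg])
        (neg_pos.2 (lt_of_le_of_ne (not_lt.1 hx₀) hx))
  wlog hy₀ : 0 < y.1 generalizing y
  · simpa only [Prod.fst_neg, abs_neg, orbitalIntegrand_neg_right hf] using
      this (y := -y) (neg_ne_zero.2 hy) (by rwa [disc_neg])
        (neg_pos.2 (lt_of_le_of_ne (not_lt.1 hy₀) hy))
  obtain ⟨h, hh, hact, hchar⟩ := exists_act_basePoint_eq hΔ hx₀ hy₀ hdx hdy
  exact ⟨h, hh, by rw [hact], by rw [hchar, abs_of_pos hx₀, abs_of_pos hy₀]⟩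

/-- The point of `ℝ⁶` represented by an orbit representative. -/
def OrbitRep.point (r : OrbitRep) : Vsp := toR ((r.1.2.k : ℤ) • r.forms)

theorem disc_cast_smul_reducedForm (k : ℤ) {m : ℕ+} {D : ℤ} (a : SqrtMod (4 * m) D) :
    disc (((k • reducedForm a).1 : ℝ), ((k • reducedForm a).2.1 : ℝ),
      ((k • reducedForm a).2.2 : ℝ)) = k ^ 2 * D := by
  have hdisc := congrArg (Int.cast : ℤ → ℝ) (disc_reducedForm a)
  simp only [disc, Prod.smul_fst, Prod.smul_snd, smul_eq_mul] at hdisc ⊢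
  push_cast at hdisc ⊢
  linear_combination (k : ℝ) ^ 2 * hdisc

theorem abs_cast_smul_reducedForm_fst (k : ℕ+) {m : ℕ+} {D : ℤ} (a : SqrtMod (4 * m) D) :
    |(((k : ℤ) • reducedForm a).1 : ℝ)| = k * m := by
  rw [← Int.cast_abs, Prod.smul_fst, smul_eq_mul, abs_mul, reducedForm, abs_lead, Nat.abs_cast]
  push_cast
  rfl

theorem OrbitType.four_cpow_mul_coeff_mul (s₁ s₂ w : ℂ) (c : OrbitType) :
    4 ^ w * c.coeff s₁ s₂ w * (((c.k * c.m : ℝ) : ℂ) ^ s₁ * ((c.k * c.n : ℝ) : ℂ) ^ s₂ *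
      ((c.k ^ 2 * c.D / 4 : ℝ) : ℂ) ^ w) = c.k := by
  have hfour : ((c.k ^ 2 * c.D : ℕ) : ℂ) ^ w =
      (4 : ℂ) ^ w * ((c.k ^ 2 * c.D / 4 : ℝ) : ℂ) ^ w := by
    rw [← Complex.ofReal_ofNat, ← ofReal_mul_cpow (by positivity) (by positivity)]
    push_cast
    congr 1
    ring
  have hne {N : ℕ} (hN : 0 < N) (s : ℂ) : (N : ℂ) ^ s ≠ 0 := by
    simp [Complex.cpow_eq_zero_iff, hN.ne']
  have hkm := hne (Nat.mul_pos c.k.pos c.m.pos) s₁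
  have hkn := hne (Nat.mul_pos c.k.pos c.n.pos) s₂
  have hkD := hne (Nat.mul_pos (pow_pos c.k.pos 2) c.D.pos) w
  rw [hfour] at hkD
  rw [OrbitType.coeff, hfour]
  push_cast at hkm hkn hkD ⊢
  field_simp

theorem OrbitRep.exists_orbitalIntegrand_eq (hf : IsEven f) (s₁ s₂ w : ℂ) (r : OrbitRep) :
    ∃ h ∈ Phidomain, orbitalIntegrand f s₁ s₂ w (act h (basePoint r.1.1)) =
        orbitalIntegrand f s₁ s₂ w r.point ∧
      r.1.2.k = 4 ^ w * r.1.2.coeff s₁ s₂ w * quasiChar s₁ s₂ w h := by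
  obtain ⟨⟨ε, k, D, m, n⟩, a, b⟩ := r
  have habs_ne_zero {t : ℝ} {l : ℕ+} (ht : |t| = k * l) : t ≠ 0 :=
    abs_pos.1 (ht ▸ by positivity)
  have hm := abs_cast_smul_reducedForm_fst k a
  have hn := abs_cast_smul_reducedForm_fst k b
  have hdisc (l : ℕ+) (c : SqrtMod (4 * l) (ε * D)) := disc_cast_smul_reducedForm k c
  obtain ⟨h, hh, hint, hchar⟩ := _root_.exists_orbitalIntegrand_eq (s₁ := s₁) (s₂ := s₂) (w := w) hf
    (ε := ε) (Δ := k ^ 2 * D) (by positivity) (habs_ne_zero hm) (habs_ne_zero hn)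
    ((hdisc m a).trans (by push_cast; ring)) ((hdisc n b).trans (by push_cast; ring))
  refine ⟨h, hh, hint, ?_⟩
  rw [hchar, hm, hn]
  exact (OrbitType.four_cpow_mul_coeff_mul s₁ s₂ w ⟨k, D, m, n⟩).symm

theorem OrbitRep.integrableOn_orbitalIntegrand (hf : IsEven f) (r : OrbitRep)
    (hint : IntegrableOn (orbitalIntegrand f s₁ s₂ w (basePoint r.1.1)) Phidomain) :
    IntegrableOn (orbitalIntegrand f s₁ s₂ w r.point) Phidomain := by
  obtain ⟨h, hh, heq, -⟩ := r.exists_orbitalIntegrand_eq hf s₁ s₂ w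
  exact heq ▸ integrableOn_orbitalIntegrand_act hh hint

theorem OrbitRep.k_mul_PhiInt (hf : IsEven f) (s₁ s₂ w : ℂ) (r : OrbitRep) :
    r.1.2.k * PhiInt f s₁ s₂ w r.point =
      4 ^ w * r.1.2.coeff s₁ s₂ w * PhiInt f s₁ s₂ w (basePoint r.1.1) := by
  obtain ⟨h, hh, heq, hk⟩ := r.exists_orbitalIntegrand_eq hf s₁ s₂ w
  rw [hk, ← quasiChar_mul_PhiInt_act hh (basePoint r.1.1), PhiInt_eq f s₁ s₂ w r.point, ← heq,
    ← PhiInt_eq, mul_assoc (4 ^ w * _)]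

theorem integral_norm_orbitalIntegrand (f : Vsp → ℂ) (s₁ s₂ w : ℂ) (z : Vsp) :
    ((∫ p in Phidomain, ‖orbitalIntegrand f s₁ s₂ w z p‖ : ℝ) : ℂ) =
      PhiInt (fun z => (‖f z‖ : ℂ)) s₁.re s₂.re w.re z := by
  rw [PhiInt_eq, ← integral_complex_ofReal]
  exact setIntegral_congr_fun measurableSet_Phidomain fun p hp => norm_orbitalIntegrand hp z

theorem OrbitRep.k_mul_integral_norm (hf : IsEven f) (s₁ s₂ w : ℂ) (r : OrbitRep) :
    r.1.2.k * ∫ p in Phidomain, ‖orbitalIntegrand f s₁ s₂ w r.point p‖ =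
      ‖(4 : ℂ) ^ w‖ * ‖r.1.2.coeff s₁ s₂ w‖ *
        ∫ p in Phidomain, ‖orbitalIntegrand f s₁ s₂ w (basePoint r.1.1) p‖ := by
  have hf' : IsEven fun z => (‖f z‖ : ℂ) := fun x y => by
    simp only [(hf x y).1, (hf x y).2, and_self]
  have h := congrArg norm (r.k_mul_PhiInt hf' s₁.re s₂.re w.re)
  have hfour : ‖(4 : ℂ) ^ (w.re : ℂ)‖ = ‖(4 : ℂ) ^ w‖ := by
    simp only [← Complex.ofReal_ofNat, Complex.norm_cpow_eq_rpow_re_of_pos four_pos,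
      Complex.ofReal_re]
  have hcoeff : ‖r.1.2.coeff s₁.re s₂.re w.re‖ = ‖r.1.2.coeff s₁ s₂ w‖ := by
    simp only [OrbitType.norm_coeff, Complex.ofReal_re]
  have hnonneg (z : Vsp) : 0 ≤ ∫ p in Phidomain, ‖orbitalIntegrand f s₁ s₂ w z p‖ :=
    integral_nonneg fun _ => norm_nonneg _
  rwa [← integral_norm_orbitalIntegrand, ← integral_norm_orbitalIntegrand, norm_mul, norm_mul,
    norm_mul, hfour, hcoeff, Complex.norm_real, Complex.norm_real, Complex.norm_natCast,
    Real.norm_of_nonneg (hnonneg _), Real.norm_of_nonneg (hnonneg _)] at h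

end OrbitalIntegrals

section BaseIntegral

/-- The function on `(0, ∞)` which is `t ^ p` up to `1` and `t ^ q` beyond. -/
def piecewiseRpow (p q t : ℝ) : ℝ := if t ≤ 1 then t ^ p else t ^ q

variable {p q t μ u v r σ M : ℝ}

theorem integrableOn_piecewiseRpow (hp : -1 < p) (hq : q < -1) :
    IntegrableOn (piecewiseRpow p q) (Set.Ioi 0) := by
  rw [← Set.Ioc_union_Ioi_eq_Ioi zero_le_one, integrableOn_union]
  constructor
  · have hint := (intervalIntegral.intervalIntegrable_rpow' (a := 0) (b := 1) hp).1
    exact hint.congr_fun (fun t ht => (if_pos ht.2).symm) measurableSet_Ioc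
  · have hint := integrableOn_Ioi_rpow_of_lt hq zero_lt_one
    exact hint.congr_fun (fun t ht => (if_neg (not_le.2 ht)).symm) measurableSet_Ioi

theorem piecewiseRpow_nonneg (ht : 0 ≤ t) : 0 ≤ piecewiseRpow p q t := by
  unfold piecewiseRpow
  split_ifs <;> positivity

theorem rpow_mul_inv_pow_three_le (hμ : 0 < μ) (ht : 0 < t) (hμM : μ ^ 2 ≤ M)
    (hμt : μ ^ 2 * t ^ 2 ≤ M) (hσ : 0 ≤ σ) :
    (μ ^ 2 * t ^ 2) ^ σ * (t ^ 3)⁻¹ ≤ M ^ σ * piecewiseRpow (2 * σ - 3) (-3) t := by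
  have : 0 ≤ M := (sq_nonneg μ).trans hμM
  have ht3 : (t ^ 3)⁻¹ = t ^ (-3 : ℝ) := by
    rw [Real.rpow_neg ht.le]
    norm_cast
  unfold piecewiseRpow
  split_ifs
  · have ht2 : (t ^ 2) ^ σ * t ^ (-3 : ℝ) = t ^ (2 * σ - 3) := by
      rw [← Real.rpow_natCast_mul ht.le, ← Real.rpow_add ht, Nat.cast_ofNat, sub_eq_add_neg]
    rw [Real.mul_rpow (by positivity) (by positivity), mul_assoc, ht3, ht2]
    gcongr
  · rw [ht3]
    gcongr

theorem rpow_le_rpow_mul_one_add_abs (hr : 0 ≤ r) (hμ : 0 < μ) (hu : μ ^ 2 * (1 + |u|) ≤ M) :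
    (μ ^ 2) ^ r ≤ M ^ r * (1 + |u|) ^ (-r) := by
  rw [Real.rpow_neg (by positivity), ← div_eq_mul_inv, ← Real.div_rpow _ (by positivity)]
  · gcongr
    rwa [le_div_iff₀ (by positivity)]
  · exact le_trans (by positivity) hu

theorem rpow_le_rpow_mul_piecewiseRpow {δ : ℝ} (hμ : 0 < μ) (hM : 1 ≤ M) (hμM : μ ^ 2 ≤ M)
    (hσ : 0 ≤ σ) (hδ : 0 < δ) :
    μ ^ (2 * σ - 1) ≤ M ^ (σ + δ) * piecewiseRpow (2 * σ - 1) (-1 - 2 * δ) μ := by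
  unfold piecewiseRpow
  split_ifs
  · exact le_mul_of_one_le_left (by positivity) (Real.one_le_rpow hM (by positivity))
  · calc μ ^ (2 * σ - 1) = (μ ^ 2) ^ (σ + δ) * μ ^ (-1 - 2 * δ) := by
          rw [← Real.rpow_natCast_mul hμ.le, ← Real.rpow_add hμ, Nat.cast_ofNat]
          ring_nf
      _ ≤ M ^ (σ + δ) * μ ^ (-1 - 2 * δ) := by gcongr

theorem rpow_mul_inv_le {δ ω : ℝ} (hμ : 0 < μ) (hM : 1 ≤ M) (hu : μ ^ 2 * (1 + |u|) ≤ M)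
    (hv : μ ^ 2 * (1 + |v|) ≤ M) (hr : 0 ≤ r) (hrω : r ≤ ω) (hδ : 0 < δ) :
    μ ^ (4 * ω) * μ⁻¹ ≤ M ^ r * (1 + |u|) ^ (-r) * (M ^ r * (1 + |v|) ^ (-r)) *
      (M ^ (2 * (ω - r) + δ) * piecewiseRpow (4 * (ω - r) - 1) (-1 - 2 * δ) μ) := by
  have hμM : μ ^ 2 ≤ M := (le_mul_of_one_le_right (by positivity) (by simp)).trans hu
  have hmain := rpow_le_rpow_mul_piecewiseRpow hμ hM hμM (show 0 ≤ 2 * (ω - r) by linarith) hδ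
  rw [show 2 * (2 * (ω - r)) = 4 * (ω - r) by ring] at hmain
  calc μ ^ (4 * ω) * μ⁻¹ = (μ ^ 2) ^ r * (μ ^ 2) ^ r * μ ^ (4 * (ω - r) - 1) := by
        rw [← Real.rpow_neg_one, ← Real.rpow_add hμ, ← Real.rpow_natCast_mul hμ.le,
          ← Real.rpow_add hμ, ← Real.rpow_add hμ, Nat.cast_ofNat]
        ring_nf
    _ ≤ _ := by
        gcongr
        · exact rpow_le_rpow_mul_one_add_abs hr hμ hu
        · exact rpow_le_rpow_mul_one_add_abs hr hμ hv

theorem abs_disc_le (x : ℝ × ℝ × ℝ) : |disc x| ≤ 5 * ‖x‖ ^ 2 := by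
  have h₁ : |x.1| ≤ ‖x‖ := norm_fst_le x
  have h₂ : |x.2.1| ≤ ‖x‖ := (norm_fst_le x.2).trans (norm_snd_le x)
  have h₃ : |x.2.2| ≤ ‖x‖ := (norm_snd_le x.2).trans (norm_snd_le x)
  calc |disc x| ≤ |x.2.1 ^ 2| + |4 * x.1 * x.2.2| := abs_sub _ _
    _ = |x.2.1| ^ 2 + 4 * (|x.1| * |x.2.2|) := by
        rw [abs_pow, abs_mul, abs_mul, Nat.abs_ofNat, mul_assoc]
    _ ≤ ‖x‖ ^ 2 + 4 * (‖x‖ * ‖x‖) := by gcongr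
    _ = 5 * ‖x‖ ^ 2 := by ring

theorem le_norm_rhoAct (ε : ℤˣ) (hμ : 0 < μ) (ht : 0 < t) :
    μ ^ 2 * t ^ 2 ≤ ‖rhoAct (μ * t) (μ * u / t) (μ / t) (1, 0, -((ε : ℤ) : ℝ))‖ ∧
    μ ^ 2 * (1 + |u|) ≤ 3 * ‖rhoAct (μ * t) (μ * u / t) (μ / t) (1, 0, -((ε : ℤ) : ℝ))‖ := by
  set z := rhoAct (μ * t) (μ * u / t) (μ / t) (1, 0, -((ε : ℤ) : ℝ)) with hz
  have hz₁ : z.1 = μ ^ 2 * t ^ 2 := by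
    simp only [hz, rhoAct]
    ring
  have hz₂ : z.2.1 = 2 * (μ ^ 2 * u) := by
    simp only [hz, rhoAct]
    field
  have hdisc : disc z = 4 * (ε : ℤ) * (μ ^ 2) ^ 2 := by
    simp only [hz, rhoAct, disc]
    field
  have hlead : |z.1| ≤ ‖z‖ := norm_fst_le z
  have hmid : |z.2.1| ≤ ‖z‖ := (norm_fst_le z.2).trans (norm_snd_le z)
  have hμ2 : 4 * (μ ^ 2) ^ 2 ≤ 5 * ‖z‖ ^ 2 := by
    have hε : |((ε : ℤ) : ℝ)| = 1 := by
      rw [← Int.cast_abs, Int.isUnit_iff_abs_eq.1 ε.isUnit, Int.cast_one]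
    refine le_of_eq_of_le ?_ (abs_disc_le z)
    rw [hdisc, abs_mul, abs_mul, hε, Nat.abs_ofNat, mul_one, abs_of_nonneg (sq_nonneg (μ ^ 2))]
  have hμz : μ ^ 2 ≤ 2 * ‖z‖ :=
    le_of_sq_le_sq (by nlinarith [sq_nonneg ‖z‖]) (by positivity)
  rw [hz₁, abs_of_pos (by positivity)] at hlead
  rw [hz₂, abs_mul, abs_mul, Nat.abs_ofNat, abs_of_pos (pow_pos hμ 2)] at hmid
  exact ⟨hlead, by rw [mul_one_add]; linarith [norm_nonneg z]⟩

/-- An integrable function on `Phidomain` which dominates the orbital integrands at the base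
points. -/
def orbitalBound (σ₁ σ₂ r α δ : ℝ) (p : Param) : ℝ :=
  piecewiseRpow (4 * α - 1) (-1 - 2 * δ) p.1 * (piecewiseRpow (2 * σ₁ - 3) (-3) p.2.1 *
    (piecewiseRpow (2 * σ₂ - 3) (-3) p.2.2.1 *
      ((1 + |p.2.2.2.1|) ^ (-r) * (1 + |p.2.2.2.2|) ^ (-r))))

theorem restrict_Phidomain : (volume : Measure Param).restrict Phidomain =
    (volume.restrict (Set.Ioi 0)).prod ((volume.restrict (Set.Ioi 0)).prod
      ((volume.restrict (Set.Ioi 0)).prod (volume : Measure (ℝ × ℝ)))) := by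
  have huniv : (volume : Measure (ℝ × ℝ)) = volume.restrict Set.univ := Measure.restrict_univ.symm
  conv_rhs => rw [huniv]
  rw [Measure.prod_restrict, Measure.prod_restrict, Measure.prod_restrict]
  rfl

theorem integrableOn_orbitalBound {σ₁ σ₂ α δ : ℝ} (h₁ : 1 < σ₁) (h₂ : 1 < σ₂) (hr : 1 < r)
    (hα : 0 < α) (hδ : 0 < δ) : IntegrableOn (orbitalBound σ₁ σ₂ r α δ) Phidomain := by
  have habs : Integrable fun u : ℝ => (1 + |u|) ^ (-r) :=
    integrable_one_add_norm (by simpa using hr)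
  rw [IntegrableOn, restrict_Phidomain]
  exact (integrableOn_piecewiseRpow (by linarith) (by linarith)).mul_prod <|
    (integrableOn_piecewiseRpow (by linarith) (by norm_num)).mul_prod <|
    (integrableOn_piecewiseRpow (by linarith) (by norm_num)).mul_prod <| habs.mul_prod habs

theorem rpow_mul_density_le {σ₁ σ₂ ω δ s : ℝ} (hp : (μ, t, s, u, v) ∈ Phidomain)
    (hM : 1 ≤ M) (hμt : μ ^ 2 * t ^ 2 ≤ M) (hμs : μ ^ 2 * s ^ 2 ≤ M)
    (hu : μ ^ 2 * (1 + |u|) ≤ M) (hv : μ ^ 2 * (1 + |v|) ≤ M) (h₁ : 0 ≤ σ₁) (h₂ : 0 ≤ σ₂)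
    (hr : 0 ≤ r) (hrω : r ≤ ω) (hδ : 0 < δ) :
    (μ ^ 2 * t ^ 2) ^ σ₁ * (μ ^ 2 * s ^ 2) ^ σ₂ * μ ^ (4 * ω) * density (μ, t, s, u, v) ≤
      M ^ (σ₁ + σ₂ + 2 * ω + δ) * orbitalBound σ₁ σ₂ r (ω - r) δ (μ, t, s, u, v) := by
  obtain ⟨hμ, ht, hs⟩ : 0 < μ ∧ 0 < t ∧ 0 < s := mem_Phidomain.1 hp
  have hμM : μ ^ 2 ≤ M := (le_mul_of_one_le_right (by positivity) (by simp)).trans hu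
  have bound_t := rpow_mul_inv_pow_three_le hμ ht hμM hμt h₁
  have bound_s := rpow_mul_inv_pow_three_le hμ hs hμM hμs h₂
  have bound_μ := rpow_mul_inv_le hμ hM hu hv hr hrω hδ
  have hMexp : M ^ (σ₁ + σ₂ + 2 * ω + δ) =
      M ^ σ₁ * M ^ σ₂ * (M ^ r * M ^ r * M ^ (2 * (ω - r) + δ)) := by
    simp only [← Real.rpow_add (zero_lt_one.trans_le hM)]
    ring_nf
  have φt : 0 ≤ piecewiseRpow (2 * σ₁ - 3) (-3) t := piecewiseRpow_nonneg ht.le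
  have φs : 0 ≤ piecewiseRpow (2 * σ₂ - 3) (-3) s := piecewiseRpow_nonneg hs.le
  calc (μ ^ 2 * t ^ 2) ^ σ₁ * (μ ^ 2 * s ^ 2) ^ σ₂ * μ ^ (4 * ω) * density (μ, t, s, u, v)
      = ((μ ^ 2 * t ^ 2) ^ σ₁ * (t ^ 3)⁻¹) * ((μ ^ 2 * s ^ 2) ^ σ₂ * (s ^ 3)⁻¹) *
          (μ ^ (4 * ω) * μ⁻¹) := by
        rw [density, mul_inv, mul_inv]
        ring
    _ ≤ _ := mul_le_mul (mul_le_mul bound_t bound_s (by positivity) (by positivity)) bound_μ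
          (by positivity) (by positivity)
    _ = _ := by
        rw [hMexp, orbitalBound]
        ring

variable {f : Vsp → ℂ} {s₁ s₂ w : ℂ} {C κ : ℝ}

theorem norm_orbitalIntegrand_basePoint_le (ε : ℤˣ) {p : Param} (hp : p ∈ Phidomain)
    (hs₁ : 0 ≤ s₁.re) (hs₂ : 0 ≤ s₂.re) (hr : 0 ≤ r) (hrw : r ≤ w.re)
    (hκ : s₁.re + s₂.re + 2 * w.re < κ) (hdecay : ∀ x, ‖f x‖ ≤ C * (1 + ‖x‖) ^ (-κ)) :
    ‖orbitalIntegrand f s₁ s₂ w (basePoint ε) p‖ ≤ C * 3 ^ κ *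
      orbitalBound s₁.re s₂.re r (w.re - r) (κ - (s₁.re + s₂.re + 2 * w.re)) p := by
  obtain ⟨μ, t, s, u, v⟩ := p
  obtain ⟨hμ, ht, hs⟩ : 0 < μ ∧ 0 < t ∧ 0 < s := mem_Phidomain.1 hp
  set z := act (μ, t, s, u, v) (basePoint ε)
  obtain ⟨hμt, hμu⟩ : μ ^ 2 * t ^ 2 ≤ ‖z.1‖ ∧ μ ^ 2 * (1 + |u|) ≤ 3 * ‖z.1‖ :=
    le_norm_rhoAct ε hμ ht
  obtain ⟨hμs, hμv⟩ : μ ^ 2 * s ^ 2 ≤ ‖z.2‖ ∧ μ ^ 2 * (1 + |v|) ≤ 3 * ‖z.2‖ :=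
    le_norm_rhoAct ε hμ hs
  have hz₁ := norm_fst_le z
  have hz₂ := norm_snd_le z
  have hz₀ := norm_nonneg z
  set M := 3 * (1 + ‖z‖) with hM
  have hM₀ : 0 < M := by positivity
  have bound_density := rpow_mul_density_le (δ := κ - (s₁.re + s₂.re + 2 * w.re)) (M := M) hp
    (by linarith) (by linarith) (by linarith) (by linarith) (by linarith) hs₁ hs₂ hr hrw
    (by linarith)
  rw [add_sub_cancel] at bound_density
  have bound_f : ‖f z‖ ≤ C * 3 ^ κ * M ^ (-κ) := by
    refine (hdecay z).trans_eq ?_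
    rw [hM, Real.mul_rpow (by positivity) (by positivity), mul_assoc, ← mul_assoc (3 ^ κ),
      ← Real.rpow_add three_pos, add_neg_cancel, Real.rpow_zero, one_mul]
  have hdensity := (density_pos hp).le
  calc ‖orbitalIntegrand f s₁ s₂ w (basePoint ε) (μ, t, s, u, v)‖
      = (μ ^ 2 * t ^ 2) ^ s₁.re * (μ ^ 2 * s ^ 2) ^ s₂.re * μ ^ (4 * w.re) *
          density (μ, t, s, u, v) * ‖f z‖ := by
        rw [orbitalIntegrand, norm_mul, norm_mul, norm_quasiChar hp, Complex.norm_real,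
          Real.norm_of_nonneg hdensity, mul_right_comm]
    _ ≤ _ := mul_le_mul bound_density bound_f (norm_nonneg _)
        ((by positivity : (0 : ℝ) ≤ _).trans bound_density)
    _ = M ^ κ * M ^ (-κ) * (C * 3 ^ κ * orbitalBound s₁.re s₂.re r (w.re - r)
          (κ - (s₁.re + s₂.re + 2 * w.re)) (μ, t, s, u, v)) := by ring
    _ = _ := by rw [← Real.rpow_add hM₀, add_neg_cancel, Real.rpow_zero, one_mul]

theorem measurable_orbitalIntegrand (hf : Measurable f) (z : Vsp) :
    Measurable (orbitalIntegrand f s₁ s₂ w z) := by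
  have hact : Measurable fun p => act p z := by
    unfold act rhoAct
    fun_prop
  unfold orbitalIntegrand quasiChar density
  fun_prop

theorem integrableOn_orbitalIntegrand_basePoint (hf : Measurable f)
    (h₁ : 1 < s₁.re) (h₂ : 1 < s₂.re) (hw : 1 < w.re) (hκ : s₁.re + s₂.re + 2 * w.re < κ)
    (hdecay : ∀ x, ‖f x‖ ≤ C * (1 + ‖x‖) ^ (-κ)) (ε : ℤˣ) :
    IntegrableOn (orbitalIntegrand f s₁ s₂ w (basePoint ε)) Phidomain := by
  obtain ⟨r, hr, hrw⟩ := exists_between hw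
  have hbound := integrableOn_orbitalBound h₁ h₂ hr (sub_pos.2 hrw) (sub_pos.2 hκ)
  refine (hbound.const_mul (C * 3 ^ κ)).mono'
    (measurable_orbitalIntegrand hf _).aestronglyMeasurable ?_
  exact (ae_restrict_iff' measurableSet_Phidomain).2 <| .of_forall fun p hp =>
    norm_orbitalIntegrand_basePoint_le ε hp (by linarith) (by linarith) (by linarith) hrw.le hκ
      hdecay

end BaseIntegral

section Summation

variable {α ι E : Type*} [MeasurableSpace α] {μ : Measure α} [NormedAddCommGroup E]

section InvariantFamily

variable {T : ι → α → α} {s : Set α} {G : α → E}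

theorem integrableOn_comp_of_iUnion_image (hT : ∀ i, MeasurePreserving (T i) μ μ)
    (hemb : ∀ i, MeasurableEmbedding (T i)) (hG : IntegrableOn G (⋃ i, T i '' s) μ) (i : ι) :
    IntegrableOn (G ∘ T i) s μ :=
  ((hT i).integrableOn_image (hemb i)).1 (hG.mono_set (Set.subset_iUnion (fun i => T i '' s) i))

theorem hasSum_setIntegral_comp_of_iUnion_image [Countable ι] [NormedSpace ℝ E]
    (hT : ∀ i, MeasurePreserving (T i) μ μ) (hemb : ∀ i, MeasurableEmbedding (T i))
    (hs : MeasurableSet s) (hdisj : Pairwise (Function.onFun Disjoint fun i => T i '' s))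
    (hG : IntegrableOn G (⋃ i, T i '' s) μ) :
    HasSum (fun i => ∫ x in s, G (T i x) ∂μ) (∫ x in ⋃ i, T i '' s, G x ∂μ) := by
  simpa only [(hT _).setIntegral_image_emb (hemb _)] using
    hasSum_integral_iUnion (fun i => (hemb i).measurableSet_image' hs) hdisj hG

end InvariantFamily

section TermwiseIntegration

variable [Countable ι] [CompleteSpace E] {F : ι → α → E}

theorem ae_hasSum_tsum_toL1 (hF : ∀ i, Integrable (F i) μ)
    (hsum : Summable fun i => ∫ x, ‖F i x‖ ∂μ) :
    ∀ᵐ x ∂μ, HasSum (fun i => F i x) ((∑' i, (hF i).toL1 (F i) : Lp E 1 μ) x) := by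
  have hnorm : ∑' i, ‖(hF i).toL1 (F i)‖ₑ ≠ ⊤ := by
    rw [tsum_enorm_ne_top_iff_summable_norm]
    simpa only [L1.norm_of_fun_eq_integral_norm] using hsum
  filter_upwards [Lp.hasSum_coeFn_tsum hnorm, ae_all_iff.2 fun i => (hF i).coeFn_toL1] with x hx heq
  simpa only [heq] using hx

theorem ae_summable_of_summable_integral_norm (hF : ∀ i, Integrable (F i) μ)
    (hsum : Summable fun i => ∫ x, ‖F i x‖ ∂μ) : ∀ᵐ x ∂μ, Summable fun i => F i x :=
  (ae_hasSum_tsum_toL1 hF hsum).mono fun _ hx => hx.summable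

theorem integrable_tsum_of_summable_integral_norm (hF : ∀ i, Integrable (F i) μ)
    (hsum : Summable fun i => ∫ x, ‖F i x‖ ∂μ) : Integrable (fun x => ∑' i, F i x) μ :=
  (L1.integrable_coeFn _).congr <| (ae_hasSum_tsum_toL1 hF hsum).mono fun _ hx => hx.tsum_eq.symm

end TermwiseIntegration

section FiniteFibres

variable {κ : Type*} {β : κ → Type*} [∀ i, Finite (β i)] {F : κ → E}

theorem hasSum_const_of_finite (b : Type*) [Finite b] (x : E) :
    HasSum (fun _ : b => x) (Nat.card b • x) := by
  have := Fintype.ofFinite b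
  simpa using hasSum_fintype fun _ : b => x

theorem summable_comp_sigma_fst [CompleteSpace E]
    (hF : Summable fun i => Nat.card (β i) • ‖F i‖) : Summable fun r : Σ i, β i => F r.1 := by
  refine .of_norm <| (summable_sigma_of_nonneg fun _ => norm_nonneg _).2
    ⟨fun i => (hasSum_const_of_finite (β i) ‖F i‖).summable, ?_⟩
  simpa only [(hasSum_const_of_finite (β _) ‖F _‖).tsum_eq] using hF

theorem tsum_comp_sigma_fst [CompleteSpace E] (hF : Summable fun i => Nat.card (β i) • ‖F i‖) :
    ∑' r : Σ i, β i, F r.1 = ∑' i, Nat.card (β i) • F i := by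
  rw [(summable_comp_sigma_fst hF).tsum_sigma]
  exact tsum_congr fun i => (hasSum_const_of_finite (β i) (F i)).tsum_eq

end FiniteFibres

end Summation

section Unfolding

/-- The parameter acting on pairs of forms as the pair of shears `j`. -/
def shearParam (j : ℤ × ℤ) : Param := (1, 1, 1, j.1, j.2)

theorem shearParam_mem_Phidomain (j : ℤ × ℤ) : shearParam j ∈ Phidomain := by
  simp [mem_Phidomain, shearParam]

theorem act_shearParam (j : ℤ × ℤ) (x : (ℤ × ℤ × ℤ) × (ℤ × ℤ × ℤ)) :
    act (shearParam j) (toR x) = toR (shearPair j x) := by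
  ext <;> simp only [act, rhoAct, shearParam, toR, shearPair, shear] <;> push_cast <;> ring

theorem density_shearParam (j : ℤ × ℤ) : density (shearParam j) = 1 := by
  simp [density, shearParam]

theorem quasiChar_shearParam (s₁ s₂ w : ℂ) (j : ℤ × ℤ) :
    quasiChar s₁ s₂ w (shearParam j) = 1 := by
  simp [quasiChar, shearParam]

theorem measurePreserving_paramMul_shearParam (j : ℤ × ℤ) :
    MeasurePreserving (paramMul (shearParam j)) :=
  ⟨(measurableEmbedding_paramMul (shearParam_mem_Phidomain j)).measurable, by
    rw [map_paramMul_volume (shearParam_mem_Phidomain j), density_shearParam, ENNReal.ofReal_one,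
      one_smul]⟩

theorem mem_Zdomain {p : Param} : p ∈ Zdomain ↔
    p ∈ Phidomain ∧ p.2.2.2.1 ∈ Set.Ioc 0 1 ∧ p.2.2.2.2 ∈ Set.Ioc 0 1 := by
  simp only [Zdomain, mem_Phidomain, Set.mem_prod, Set.mem_Ioi, and_assoc]

theorem Zdomain_subset_Phidomain : Zdomain ⊆ Phidomain := fun _ hp => (mem_Zdomain.1 hp).1

theorem measurableSet_Zdomain : MeasurableSet Zdomain :=
  measurableSet_Ioi.prod <| measurableSet_Ioi.prod <| measurableSet_Ioi.prod <|
    measurableSet_Ioc.prod measurableSet_Ioc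

theorem sub_intCast_mem_Ioc_iff {u : ℝ} {j : ℤ} : u - j ∈ Set.Ioc (0 : ℝ) 1 ↔ j = ⌈u⌉ - 1 := by
  rw [eq_sub_iff_add_eq, eq_comm, Int.ceil_eq_iff, Set.mem_Ioc]
  push_cast
  constructor <;> rintro ⟨hlt, hle⟩ <;> constructor <;> linarith

theorem mem_paramMul_shearParam_image_Zdomain {j : ℤ × ℤ} {p : Param} :
    p ∈ paramMul (shearParam j) '' Zdomain ↔
      p ∈ Phidomain ∧ j = (⌈p.2.2.2.1⌉ - 1, ⌈p.2.2.2.2⌉ - 1) := by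
  rw [Prod.ext_iff, ← sub_intCast_mem_Ioc_iff, ← sub_intCast_mem_Ioc_iff]
  constructor
  · rintro ⟨q, hq, rfl⟩
    simpa [mem_Zdomain, mem_Phidomain, paramMul, shearParam] using hq
  · intro hp
    refine ⟨(p.1, p.2.1, p.2.2.1, p.2.2.2.1 - j.1, p.2.2.2.2 - j.2), mem_Zdomain.2 ?_, ?_⟩
    · simpa [mem_Phidomain] using hp
    · simp [paramMul, shearParam]

theorem iUnion_paramMul_shearParam_image_Zdomain :
    ⋃ j, paramMul (shearParam j) '' Zdomain = Phidomain := by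
  ext p
  simp only [Set.mem_iUnion, mem_paramMul_shearParam_image_Zdomain, exists_and_left, exists_eq,
    and_true]

theorem pairwise_disjoint_paramMul_shearParam_image_Zdomain :
    Pairwise (Function.onFun Disjoint fun j => paramMul (shearParam j) '' Zdomain) := by
  intro j l hjl
  refine Set.disjoint_left.2 fun p hj hl => hjl ?_
  rw [(mem_paramMul_shearParam_image_Zdomain.1 hj).2,
    (mem_paramMul_shearParam_image_Zdomain.1 hl).2]

variable {E : Type*} [NormedAddCommGroup E] {G : Param → E}

theorem integrableOn_Zdomain_comp_shearParam (hG : IntegrableOn G Phidomain) (j : ℤ × ℤ) :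
    IntegrableOn (G ∘ paramMul (shearParam j)) Zdomain :=
  integrableOn_comp_of_iUnion_image measurePreserving_paramMul_shearParam
    (fun j => measurableEmbedding_paramMul (shearParam_mem_Phidomain j))
    (iUnion_paramMul_shearParam_image_Zdomain ▸ hG) j

theorem hasSum_integral_Zdomain_comp_shearParam [NormedSpace ℝ E] (hG : IntegrableOn G Phidomain) :
    HasSum (fun j => ∫ p in Zdomain, G (paramMul (shearParam j) p)) (∫ p in Phidomain, G p) := by
  rw [← iUnion_paramMul_shearParam_image_Zdomain] at hG ⊢
  exact hasSum_setIntegral_comp_of_iUnion_image measurePreserving_paramMul_shearParam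
    (fun j => measurableEmbedding_paramMul (shearParam_mem_Phidomain j)) measurableSet_Zdomain
    pairwise_disjoint_paramMul_shearParam_image_Zdomain hG

end Unfolding

section ZetaIntegral

/-- The contribution to `Zintegrand` of the lattice point `orbitPoint i`. -/
def orbitTerm (f : Vsp → ℂ) (s₁ s₂ w : ℂ) (i : OrbitRep × (ℤ × ℤ)) (p : Param) : ℂ :=
  i.1.1.2.k * orbitalIntegrand f s₁ s₂ w (toR ((i.1.1.2.k : ℤ) • shearPair i.2 i.1.forms)) p

variable {f : Vsp → ℂ} {s₁ s₂ w : ℂ}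

theorem orbitTerm_eq {p : Param} (hp : p ∈ Phidomain) (r : OrbitRep) (j : ℤ × ℤ) :
    orbitTerm f s₁ s₂ w (r, j) p =
      r.1.2.k * orbitalIntegrand f s₁ s₂ w r.point (paramMul (shearParam j) p) := by
  rw [orbitalIntegrand_paramMul (shearParam_mem_Phidomain j) hp, OrbitRep.point, act_shearParam,
    shearPair_smul, quasiChar_shearParam, density_shearParam, Complex.ofReal_one, one_mul, one_mul]
  rfl

theorem Zintegrand_eq_tsum_orbitTerm {p : Param} (hp : p ∈ Phidomain)
    (hsum : Summable fun i => orbitTerm f s₁ s₂ w i p) :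
    Zintegrand f s₁ s₂ w p = ∑' i, orbitTerm f s₁ s₂ w i p := by
  let term : ℕ+ × Lset → ℂ := fun q => q.1 * f (act p (toR ((q.1 : ℤ) • q.2.1)))
  let e := Equiv.ofBijective orbitPoint orbitPoint_bijective
  set c := quasiChar s₁ s₂ w p * density p with hc
  have hc₀ : c ≠ 0 := mul_ne_zero (quasiChar_ne_zero hp) (mod_cast (density_pos hp).ne')
  have hterm (i : OrbitRep × (ℤ × ℤ)) : orbitTerm f s₁ s₂ w i p = c * term (e i) := by
    have hcomm (a b c d : ℂ) : a * (b * c * d) = b * d * (a * c) := by ring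
    exact hcomm _ _ _ _
  have hlattice : latticeSum f p = ∑' i, term (e i) := by
    refine ((e.tsum_eq term).trans (Summable.tsum_prod ?_)).symm
    rw [← e.summable_iff, ← summable_mul_left_iff hc₀]
    exact hsum.congr hterm
  rw [tsum_congr hterm, tsum_mul_left, ← hlattice, hc, mul_right_comm]
  rfl

theorem OrbitRep.integrableOn_orbitTerm (hf : IsEven f) (r : OrbitRep) (j : ℤ × ℤ)
    (hint : IntegrableOn (orbitalIntegrand f s₁ s₂ w (basePoint r.1.1)) Phidomain) :
    IntegrableOn (orbitTerm f s₁ s₂ w (r, j)) Zdomain := by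
  have hint' := integrableOn_Zdomain_comp_shearParam (r.integrableOn_orbitalIntegrand hf hint) j
  exact IntegrableOn.congr_fun (hint'.const_mul (r.1.2.k : ℂ))
    (fun p hp => (orbitTerm_eq (Zdomain_subset_Phidomain hp) r j).symm) measurableSet_Zdomain

theorem OrbitRep.hasSum_integral_orbitTerm (hf : IsEven f) (r : OrbitRep)
    (hint : IntegrableOn (orbitalIntegrand f s₁ s₂ w (basePoint r.1.1)) Phidomain) :
    HasSum (fun j => ∫ p in Zdomain, orbitTerm f s₁ s₂ w (r, j) p)
      (4 ^ w * r.1.2.coeff s₁ s₂ w * PhiInt f s₁ s₂ w (basePoint r.1.1)) := by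
  rw [← r.k_mul_PhiInt hf]
  refine ((hasSum_integral_Zdomain_comp_shearParam
    (r.integrableOn_orbitalIntegrand hf hint)).mul_left _).congr_fun fun j => ?_
  rw [← integral_const_mul]
  exact setIntegral_congr_fun measurableSet_Zdomain fun p hp =>
    orbitTerm_eq (Zdomain_subset_Phidomain hp) r j

theorem OrbitRep.hasSum_integral_norm_orbitTerm (hf : IsEven f) (r : OrbitRep)
    (hint : IntegrableOn (orbitalIntegrand f s₁ s₂ w (basePoint r.1.1)) Phidomain) :
    HasSum (fun j => ∫ p in Zdomain, ‖orbitTerm f s₁ s₂ w (r, j) p‖)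
      (‖(4 : ℂ) ^ w‖ * ‖r.1.2.coeff s₁ s₂ w‖ *
        ∫ p in Phidomain, ‖orbitalIntegrand f s₁ s₂ w (basePoint r.1.1) p‖) := by
  rw [← r.k_mul_integral_norm hf]
  refine ((hasSum_integral_Zdomain_comp_shearParam
    (r.integrableOn_orbitalIntegrand hf hint).norm).mul_left _).congr_fun fun j => ?_
  rw [← integral_const_mul]
  refine setIntegral_congr_fun measurableSet_Zdomain fun p hp => ?_
  simp only [orbitTerm_eq (Zdomain_subset_Phidomain hp) r j, norm_mul, Complex.norm_natCast]

instance OrbitRep.finite_fibre (c : ℤˣ × OrbitType) :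
    Finite (SqrtMod (4 * c.2.m) (c.1 * c.2.D) × SqrtMod (4 * c.2.n) (c.1 * c.2.D)) := by
  have (m : ℕ+) : NeZero (4 * m : ℕ) := ⟨by positivity⟩
  infer_instance

theorem natCard_sqrtMod_prod (c : ℤˣ × OrbitType) :
    Nat.card (SqrtMod (4 * c.2.m) (c.1 * c.2.D) × SqrtMod (4 * c.2.n) (c.1 * c.2.D)) =
      c.2.mult c.1 :=
  Nat.card_prod _ _

theorem summable_mult_smul_norm_coeff_mul (h₁ : 1 < s₁.re) (h₂ : 1 < s₂.re) (hw : 1 < w.re)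
    (Q : ℤˣ → ℂ) :
    Summable fun c : ℤˣ × OrbitType => c.2.mult c.1 • ‖4 ^ w * c.2.coeff s₁ s₂ w * Q c.1‖ := by
  refine (summable_prod_of_nonneg fun c => by positivity).2 ⟨fun ε => ?_, .of_finite⟩
  refine ((OrbitType.summable_mult_mul_norm_coeff ε h₁ h₂ hw).mul_left
    (‖(4 : ℂ) ^ w‖ * ‖Q ε‖)).congr fun c => ?_
  rw [nsmul_eq_mul, norm_mul, norm_mul]
  ring

theorem OrbitRep.summable_coeff_mul (h₁ : 1 < s₁.re) (h₂ : 1 < s₂.re) (hw : 1 < w.re) (Q : ℤˣ → ℂ) :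
    Summable fun r : OrbitRep => 4 ^ w * r.1.2.coeff s₁ s₂ w * Q r.1.1 := by
  refine summable_comp_sigma_fst (F := fun c : ℤˣ × OrbitType => 4 ^ w * c.2.coeff s₁ s₂ w * Q c.1)
    ?_
  simpa only [natCard_sqrtMod_prod] using summable_mult_smul_norm_coeff_mul h₁ h₂ hw Q

theorem tsum_mult_smul_coeff_mul (h₁ : 1 < s₁.re) (h₂ : 1 < s₂.re) (hw : 1 < w.re)
    (ε : ℤˣ) (q : ℂ) :
    ∑' c : OrbitType, c.mult ε • (4 ^ w * c.coeff s₁ s₂ w * q) = 4 ^ w * xiMDS ε s₁ s₂ w * q := by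
  rw [← OrbitType.tsum_mult_mul_coeff ε h₁ h₂ hw, ← tsum_mul_left, ← tsum_mul_right]
  refine tsum_congr fun c => ?_
  rw [nsmul_eq_mul]
  ring

theorem OrbitRep.tsum_coeff_mul (h₁ : 1 < s₁.re) (h₂ : 1 < s₂.re) (hw : 1 < w.re) (Q : ℤˣ → ℂ) :
    ∑' r : OrbitRep, 4 ^ w * r.1.2.coeff s₁ s₂ w * Q r.1.1 =
      4 ^ w * xiMDS 1 s₁ s₂ w * Q 1 + 4 ^ w * xiMDS (-1) s₁ s₂ w * Q (-1) := by
  have hsum := summable_mult_smul_norm_coeff_mul h₁ h₂ hw Q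
  rw [tsum_comp_sigma_fst (F := fun c : ℤˣ × OrbitType => 4 ^ w * c.2.coeff s₁ s₂ w * Q c.1)
    (by simpa only [natCard_sqrtMod_prod] using hsum)]
  simp only [natCard_sqrtMod_prod]
  rw [Summable.tsum_prod (.of_norm (hsum.congr fun c => (RCLike.norm_nsmul ℂ _ _).symm)),
    tsum_fintype]
  simp only [tsum_mult_smul_coeff_mul h₁ h₂ hw]
  exact Finset.sum_pair (by decide)

theorem integrableOn_Zintegrand_and_Zfun_eq (h₁ : 1 < s₁.re) (h₂ : 1 < s₂.re) (hw : 1 < w.re)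
    (hf : IsEven f)
    (hint : ∀ ε : ℤˣ, IntegrableOn (orbitalIntegrand f s₁ s₂ w (basePoint ε)) Phidomain) :
    IntegrableOn (Zintegrand f s₁ s₂ w) Zdomain ∧
      Zfun f s₁ s₂ w = 4 ^ w * xiMDS 1 s₁ s₂ w * PhiInt f s₁ s₂ w xplus +
        4 ^ w * xiMDS (-1) s₁ s₂ w * PhiInt f s₁ s₂ w xminus := by
  have : Countable (OrbitRep × (ℤ × ℤ)) := orbitPoint_injective.countable
  have hterm (i : OrbitRep × (ℤ × ℤ)) : IntegrableOn (orbitTerm f s₁ s₂ w i) Zdomain :=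
    i.1.integrableOn_orbitTerm hf i.2 (hint _)
  have hsum : Summable fun i => ∫ p in Zdomain, ‖orbitTerm f s₁ s₂ w i p‖ := by
    have hfibre (r : OrbitRep) := r.hasSum_integral_norm_orbitTerm hf (hint _)
    refine (summable_prod_of_nonneg fun i => integral_nonneg fun p => norm_nonneg _).2
      ⟨fun r => (hfibre r).summable, ?_⟩
    refine (OrbitRep.summable_coeff_mul h₁ h₂ hw fun ε =>
      (∫ p in Phidomain, ‖orbitalIntegrand f s₁ s₂ w (basePoint ε) p‖ : ℝ)).norm.congr fun r => ?_
    rw [(hfibre r).tsum_eq, norm_mul, norm_mul, Complex.norm_real,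
      Real.norm_of_nonneg (integral_nonneg fun p => norm_nonneg _)]
  have hZ : Zintegrand f s₁ s₂ w =ᵐ[volume.restrict Zdomain]
      fun p => ∑' i, orbitTerm f s₁ s₂ w i p := by
    filter_upwards [ae_summable_of_summable_integral_norm hterm hsum,
      ae_restrict_mem measurableSet_Zdomain] with p hp hpZ
    exact Zintegrand_eq_tsum_orbitTerm (Zdomain_subset_Phidomain hpZ) hp
  refine ⟨(integrable_tsum_of_summable_integral_norm hterm hsum).congr hZ.symm, ?_⟩
  have hval := hasSum_integral_of_summable_integral_norm hterm hsum
  rw [Zfun, integral_congr_ae hZ, ← hval.tsum_eq, hval.summable.tsum_prod,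
    tsum_congr fun r : OrbitRep => (r.hasSum_integral_orbitTerm hf (hint _)).tsum_eq,
    OrbitRep.tsum_coeff_mul h₁ h₂ hw fun ε => PhiInt f s₁ s₂ w (basePoint ε), basePoint_one,
    basePoint_neg_one]

end ZetaIntegral

theorem exists_norm_le_mul_one_add_norm_rpow {E F : Type*} [NormedAddCommGroup E]
    [NormedSpace ℝ E] [NormedAddCommGroup F] [NormedSpace ℝ F] (f : SchwartzMap E F) (κ : ℝ) :
    ∃ C, ∀ x, ‖f x‖ ≤ C * (1 + ‖x‖) ^ (-κ) := by
  obtain ⟨N, hN⟩ := exists_nat_ge κ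
  refine ⟨2 ^ N * ((Finset.Iic (N, 0)).sup fun m => SchwartzMap.seminorm ℝ m.1 m.2) f, fun x => ?_⟩
  have hx : 1 ≤ 1 + ‖x‖ := le_add_of_nonneg_right (norm_nonneg x)
  have hsup := SchwartzMap.one_add_le_sup_seminorm_apply (𝕜 := ℝ) (m := (N, 0)) le_rfl le_rfl f x
  rw [norm_iteratedFDeriv_zero] at hsup
  rw [Real.rpow_neg (by positivity), ← div_eq_mul_inv, le_div_iff₀ (by positivity), mul_comm]
  refine le_trans ?_ hsup
  gcongr
  exact (Real.rpow_le_rpow_of_exponent_le hx hN).trans_eq (Real.rpow_natCast _ _)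

theorem stmt13_general {f : Vsp → ℂ} (hmeas : Measurable f) (hf : IsEven f) {s₁ s₂ w : ℂ}
    (h₁ : 1 < s₁.re) (h₂ : 1 < s₂.re) (hw : 1 < w.re) {C κ : ℝ}
    (hκ : s₁.re + s₂.re + 2 * w.re < κ) (hdecay : ∀ x, ‖f x‖ ≤ C * (1 + ‖x‖) ^ (-κ)) :
    IntegrableOn (Zintegrand f s₁ s₂ w) Zdomain ∧
      Zfun f s₁ s₂ w = 4 ^ w * xiMDS 1 s₁ s₂ w * PhiInt f s₁ s₂ w xplus +
        4 ^ w * xiMDS (-1) s₁ s₂ w * PhiInt f s₁ s₂ w xminus :=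
  integrableOn_Zintegrand_and_Zfun_eq h₁ h₂ hw hf <|
    integrableOn_orbitalIntegrand_basePoint hmeas h₁ h₂ hw hκ hdecay

theorem stmt13 (f : SchwartzMap Vsp ℂ)
    (hf : ∀ x y : ℝ × ℝ × ℝ, f (-x, y) = f (x, y) ∧ f (x, -y) = f (x, y))
    (s₁ s₂ w : ℂ) (h1 : 1 < s₁.re) (h2 : 1 < s₂.re) (h3 : 3 < w.re) :
    IntegrableOn (Zintegrand (⇑f) s₁ s₂ w) Zdomain volume ∧
    Zfun (⇑f) s₁ s₂ w
      = (4 : ℂ) ^ w * xiMDS 1 s₁ s₂ w * PhiInt (⇑f) s₁ s₂ w xplus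
        + (4 : ℂ) ^ w * xiMDS (-1) s₁ s₂ w * PhiInt (⇑f) s₁ s₂ w xminus := by
  obtain ⟨C, hC⟩ := exists_norm_le_mul_one_add_norm_rpow f (s₁.re + s₂.re + 2 * w.re + 1)
  exact stmt13_general f.continuous.measurable hf h1 h2 (by linarith) (by linarith) hC
end
end

section
/- Let f : ℝ⁶ → ℂ be a Schwartz function satisfying f(−x, y) = f(x, −y) = f(x, y), and let s₁, s₂ ∈ ℂ with Re(s₁) > 1 and Re(s₂) > 1. For any w ∈ ℂ, assuming both sides converge absolutely, ∫_{(0,1]}∫₀^∞∫₀^∞∫₀¹∫₀¹ (μ²t²)^{s₁} (μ²s²)^{s₂} μ^{4w} ∑_{k=1}^{∞} ∑_{v ∈ kL'} k · f(μ⁻⁴·(h·v)) du dv (dt/t³)(ds/s³)(dμ/μ) = Z₊(f, s₁, s₂, −s₁−s₂−w), where Z₊(f,s₁,s₂,w) := ∫_{[1,∞)}∫₀^∞∫₀^∞∫₀¹∫₀¹ (μ²t²)^{s₁} (μ²s²)^{s₂} μ^{4w} ∑_{k=1}^{∞} ∑_{v ∈ kL'} k · f(h·v) du dv (dt/t³)(ds/s³)(dμ/μ)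 and μ⁻⁴·(h·v) denotes scalar multiplication by μ⁻⁴ on ℝ⁶. -/
open MeasureTheory

noncomputable section

/-- Integration domain of `Z₊`: `μ ∈ [1,∞)`, `t, s ∈ (0,∞)`, `u, v ∈ (0,1]`. -/
def ZplusDomain : Set Param :=
  Set.Ici 1 ×ˢ Set.Ioi 0 ×ˢ Set.Ioi 0 ×ˢ Set.Ioc 0 1 ×ˢ Set.Ioc 0 1

/-- Integration domain with `μ ∈ (0,1]`. -/
def ZminusDomain : Set Param :=
  Set.Ioc 0 1 ×ˢ Set.Ioi 0 ×ˢ Set.Ioi 0 ×ˢ Set.Ioc 0 1 ×ˢ Set.Ioc 0 1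

/-- The lattice sum `∑_{k≥1} ∑_{v ∈ kL'} k · f(μ⁻⁴·(h·v))`, where `μ⁻⁴·` is scalar
multiplication on `ℝ⁶`. -/
def latticeSumScaled (f : Vsp → ℂ) (h : Param) : ℂ :=
  ∑' (k : ℕ+) (x : Lset), (k : ℂ) *
    f ((h.1 ^ 4)⁻¹ • act h (toR ((k : ℤ) • (x : (ℤ × ℤ × ℤ) × (ℤ × ℤ × ℤ)))))

/-- Integrand of the left-hand side of Lemma "changing variable from h to h⁻¹". -/
def Lintegrand (f : Vsp → ℂ) (s₁ s₂ w : ℂ) (p : Param) : ℂ :=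
  ((p.1 ^ 2 * p.2.1 ^ 2 : ℝ) : ℂ) ^ s₁ * ((p.1 ^ 2 * p.2.2.1 ^ 2 : ℝ) : ℂ) ^ s₂ *
    ((p.1 : ℝ) : ℂ) ^ (4 * w) * latticeSumScaled f p *
    (((p.2.1 ^ 3 * p.2.2.1 ^ 3 * p.1)⁻¹ : ℝ) : ℂ)

/-!
Inversion `μ ↦ μ⁻¹` of the scaling parameter alone carries the left-hand side to `Z₊`. The
representation `rhoAct` is quadratic in the matrix, so scaling by `μ⁻⁴ = (μ⁻²)²` replaces `μ` by
`μ⁻² · μ = μ⁻¹`. On the powers, `μ² = μ⁻² · μ⁴` turns the exponent `4w` of `μ` into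
`4(s₁ + s₂ + w)`, which is the exponent `4(-s₁ - s₂ - w)` of `μ⁻¹`. The measure `dμ/μ` is
invariant under inversion.
-/

section Inversion

theorem measurePreserving_inv_withDensity :
    MeasurePreserving (Inv.inv : ℝ → ℝ)
      (volume.withDensity fun x ↦ ENNReal.ofReal (x ^ 2)⁻¹) volume := by
  refine ⟨measurable_inv, ?_⟩
  have map_restrict_compl_zero := map_withDensity_abs_det_fderiv_eq_addHaar (volume : Measure ℝ)
    (measurableSet_singleton (0 : ℝ)).compl.nullMeasurableSet
    (fun _ hx ↦ (hasDerivAt_inv hx).hasDerivWithinAt.hasFDerivWithinAt) inv_injective.injOn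
  have image_inv : Inv.inv '' ({0}ᶜ : Set ℝ) = {0}ᶜ := by
    rw [Set.image_inv_eq_inv, Set.compl_inv, Set.inv_singleton, inv_zero]
  simpa [image_inv, restrict_compl_singleton] using map_restrict_compl_zero

variable {Y E : Type*} [MeasurableSpace Y] {ν : Measure Y} [SFinite ν]
  [NormedAddCommGroup E] [NormedSpace ℝ E]

theorem measurePreserving_prodMap_inv_id_withDensity :
    MeasurePreserving (Prod.map Inv.inv id : ℝ × Y → ℝ × Y)
      ((volume.prod ν).withDensity fun p ↦ ENNReal.ofReal (p.1 ^ 2)⁻¹) (volume.prod ν) := by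
  rw [← prod_withDensity_left (f := fun x : ℝ ↦ ENNReal.ofReal (x ^ 2)⁻¹) (by fun_prop)]
  exact measurePreserving_inv_withDensity.prod (.id ν)

theorem measurableEmbedding_prodMap_inv_id :
    MeasurableEmbedding (Prod.map Inv.inv id : ℝ × Y → ℝ × Y) :=
  measurableEmbedding_inv.prodMap .id

theorem integrableOn_comp_inv_fst_iff (S : Set (ℝ × Y)) (g : ℝ × Y → E) :
    IntegrableOn (fun p ↦ (p.1 ^ 2)⁻¹ • g (p.1⁻¹, p.2)) (Prod.map Inv.inv id ⁻¹' S)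
        (volume.prod ν) ↔
      IntegrableOn g S (volume.prod ν) := by
  rw [← measurePreserving_prodMap_inv_id_withDensity.integrableOn_comp_preimage
      measurableEmbedding_prodMap_inv_id (f := g) (s := S), IntegrableOn, IntegrableOn,
    restrict_withDensity', integrable_withDensity_iff_integrable_smul' (by fun_prop) (by simp)]
  simp [ENNReal.toReal_ofReal, sq_nonneg, Prod.map]

theorem setIntegral_comp_inv_fst (S : Set (ℝ × Y)) (g : ℝ × Y → E) :
    ∫ p in Prod.map Inv.inv id ⁻¹' S, (p.1 ^ 2)⁻¹ • g (p.1⁻¹, p.2) ∂volume.prod ν =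
      ∫ p in S, g p ∂volume.prod ν := by
  rw [← measurePreserving_prodMap_inv_id_withDensity.setIntegral_preimage_emb
      measurableEmbedding_prodMap_inv_id g S,
    setIntegral_withDensity_eq_setIntegral_toReal_smul' _ (by fun_prop) (by simp)]
  simp [ENNReal.toReal_ofReal, sq_nonneg, Prod.map]

end Inversion

theorem rhoAct_mul_mul_mul (r a c d : ℝ) (x : ℝ × ℝ × ℝ) :
    rhoAct (r * a) (r * c) (r * d) x = r ^ 2 • rhoAct a c d x := by
  ext <;> simp only [rhoAct, Prod.smul_fst, Prod.smul_snd, smul_eq_mul] <;> ring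

theorem act_mul_fst (r : ℝ) (p : Param) (q : Vsp) :
    act (r * p.1, p.2) q = r ^ 2 • act p q := by
  simp only [act, mul_assoc, mul_div_assoc, rhoAct_mul_mul_mul, Prod.smul_mk]

theorem latticeSumScaled_eq_latticeSum_inv_fst (f : Vsp → ℂ) (p : Param) :
    latticeSumScaled f p = latticeSum f (p.1⁻¹, p.2) := by
  have inv_eq : p.1⁻¹ = (p.1 ^ 2)⁻¹ * p.1 := by
    rcases eq_or_ne p.1 0 with hp | hp <;> field_simp [hp]
  have inv_pow_four : (p.1 ^ 4)⁻¹ = (p.1 ^ 2)⁻¹ ^ 2 := by ring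
  simp only [latticeSumScaled, latticeSum, inv_eq, inv_pow_four, act_mul_fst]

theorem ofReal_pow_cpow {x : ℝ} (hx : 0 ≤ x) (n : ℕ) (s : ℂ) :
    ((x ^ n : ℝ) : ℂ) ^ s = (x : ℂ) ^ (n * s) := by
  rw [Complex.ofReal_pow, Complex.cpow_nat_mul'] <;>
    simp [Complex.arg_ofReal_of_nonneg hx, Real.pi_pos, Real.pi_nonneg]

theorem sq_mul_cpow_eq_inv_sq_mul_cpow {m y : ℝ} (hm : 0 < m) (hy : 0 ≤ y) (s : ℂ) :
    ((m ^ 2 * y : ℝ) : ℂ) ^ s = ((m⁻¹ ^ 2 * y : ℝ) : ℂ) ^ s * (m : ℂ) ^ (4 * s) := by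
  have split_four : m ^ 2 * y = m⁻¹ ^ 2 * y * m ^ 4 := by field_simp
  rw [split_four, Complex.ofReal_mul,
    Complex.mul_cpow_ofReal_nonneg (by positivity) (by positivity), ofReal_pow_cpow hm.le,
    Nat.cast_ofNat]

theorem inv_cpow_four_mul_neg_sub_sub {m : ℝ} (hm : 0 < m) (s₁ s₂ w : ℂ) :
    ((m⁻¹ : ℝ) : ℂ) ^ (4 * (-s₁ - s₂ - w)) =
      (m : ℂ) ^ (4 * s₁) * (m : ℂ) ^ (4 * s₂) * (m : ℂ) ^ (4 * w) := by
  have m_ne_zero : (m : ℂ) ≠ 0 := Complex.ofReal_ne_zero.2 hm.ne'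
  rw [Complex.ofReal_inv, Complex.inv_cpow_ofReal_nonneg hm.le, ← Complex.cpow_neg,
    ← Complex.cpow_add _ _ m_ne_zero, ← Complex.cpow_add _ _ m_ne_zero]
  ring_nf

theorem Lintegrand_eq_smul_Zintegrand (f : Vsp → ℂ) (s₁ s₂ w : ℂ) {p : Param} (hp : 0 < p.1) :
    Lintegrand f s₁ s₂ w p =
      (p.1 ^ 2)⁻¹ • Zintegrand f s₁ s₂ (-s₁ - s₂ - w) (p.1⁻¹, p.2) := by
  have haar_weight : (p.2.1 ^ 3 * p.2.2.1 ^ 3 * p.1)⁻¹ =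
      (p.1 ^ 2)⁻¹ * (p.2.1 ^ 3 * p.2.2.1 ^ 3 * p.1⁻¹)⁻¹ := by
    simp only [mul_inv, inv_inv]
    field_simp
  simp only [Lintegrand, Zintegrand, Complex.real_smul, inv_cpow_four_mul_neg_sub_sub hp,
    latticeSumScaled_eq_latticeSum_inv_fst, sq_mul_cpow_eq_inv_sq_mul_cpow hp (sq_nonneg _),
    haar_weight, Complex.ofReal_mul (p.1 ^ 2)⁻¹]
  ring

theorem measurableSet_ZminusDomain : MeasurableSet ZminusDomain := by
  unfold ZminusDomain
  measurability

theorem preimage_prodMap_inv_id_ZplusDomain :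
    Prod.map Inv.inv id ⁻¹' ZplusDomain = ZminusDomain := by
  have preimage_inv_Ici : Inv.inv ⁻¹' Set.Ici (1 : ℝ) = Set.Ioc 0 1 :=
    Set.ext fun x ↦ one_le_inv_iff₀ (a := x)
  rw [ZplusDomain, ZminusDomain, Set.preimage_prod_map_prod, Set.preimage_id, preimage_inv_Ici]

theorem stmt14_general (f : Vsp → ℂ) (s₁ s₂ w : ℂ)
    (hL : IntegrableOn (Lintegrand f s₁ s₂ w) ZminusDomain volume) :
    IntegrableOn (Zintegrand f s₁ s₂ (-s₁ - s₂ - w)) ZplusDomain volume ∧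
      (∫ p in ZminusDomain, Lintegrand f s₁ s₂ w p) =
        ∫ p in ZplusDomain, Zintegrand f s₁ s₂ (-s₁ - s₂ - w) p := by
  have integrand_eq : Set.EqOn (Lintegrand f s₁ s₂ w)
      (fun p ↦ (p.1 ^ 2)⁻¹ • Zintegrand f s₁ s₂ (-s₁ - s₂ - w) (p.1⁻¹, p.2)) ZminusDomain :=
    fun p hp ↦ Lintegrand_eq_smul_Zintegrand f s₁ s₂ w hp.1.1
  rw [integrableOn_congr_fun integrand_eq measurableSet_ZminusDomain,
    ← preimage_prodMap_inv_id_ZplusDomain] at hL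
  rw [setIntegral_congr_fun measurableSet_ZminusDomain integrand_eq,
    ← preimage_prodMap_inv_id_ZplusDomain]
  exact ⟨(integrableOn_comp_inv_fst_iff _ _).1 hL, setIntegral_comp_inv_fst _ _⟩

theorem stmt14 (f : SchwartzMap Vsp ℂ)
    (hf : ∀ x y : ℝ × ℝ × ℝ, f (-x, y) = f (x, y) ∧ f (x, -y) = f (x, y))
    (s₁ s₂ w : ℂ) (h1 : 1 < s₁.re) (h2 : 1 < s₂.re)
    (hL : IntegrableOn (Lintegrand (⇑f) s₁ s₂ w) ZminusDomain volume)
    (hR : IntegrableOn (Zintegrand (⇑f) s₁ s₂ (-s₁ - s₂ - w)) ZplusDomain volume) :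
    (∫ p in ZminusDomain, Lintegrand (⇑f) s₁ s₂ w p)
      = ∫ p in ZplusDomain, Zintegrand (⇑f) s₁ s₂ (-s₁ - s₂ - w) p :=
  (stmt14_general f s₁ s₂ w hL).2
end
end

section
/- Let f : ℝ⁶ → ℂ be a Schwartz function satisfying f(−x, y) = f(x, −y) = f(x, y), and let s₁, s₂, w ∈ ℂ with Re(s₁) > 1 and Re(s₂) > 1 (w arbitrary). Then the integral Z₊(f,s₁,s₂,w) := ∫_{[1,∞)}∫₀^∞∫₀^∞∫₀¹∫₀¹ (μ²t²)^{s₁} (μ²s²)^{s₂} μ^{4w} ∑_{k=1}^{∞} ∑_{v ∈ kL'} k · f(h·v) du dv (dt/t³)(ds/s³)(dμ/μ), in which the domain of the μ-integration is restricted to μ ≥ 1, converges absolutely for every w ∈ ℂ. -/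
open MeasureTheory

noncomputable section

/-!
Put `N = μ²k`, which is at least `1` on the domain of `Z₊`. The action preserves the discriminant
up to scaling, so `N² |D| ≤ 5 ‖X‖²` for each of the two transformed forms `X`: rapid decay of `f`
therefore yields arbitrarily large negative powers of `μ`, `k` and `|D|`, which make the integral
over `μ` and the sums over `k` and `D` converge, whatever `w` is. For fixed `D` the two forms
decouple. A form of discriminant `D` is determined by `x₁` and a root `x₂` of `x₂² ≡ D` modulo
`4x₁`. Summing over the roots in a residue class unfolds the integral of `(1 + (2x₁u + x₂)²)⁻¹`
over `u ∈ (0, 1]` to one over `ℝ`, of size `|x₁|⁻¹`, and there are `O(|D| d(|x₁|))` residue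
classes, where `d` counts divisors. The integral over `t` is `|x₁|^(1 - σ) / (2(σ - 1))`, so
what is left is `∑ d(m) m^(-σ) = ζ(σ)²`, which is finite for `σ > 1`.
-/

section DivisorSums

theorem card_divisors_mul_le (m n : ℕ) :
    (m * n).divisors.card ≤ m.divisors.card * n.divisors.card := by
  rw [Nat.divisors_mul]
  exact Finset.card_mul_le

open ArithmeticFunction in
theorem summable_card_divisors_mul_rpow {σ : ℝ} (hσ : 1 < σ) :
    Summable fun n : ℕ ↦ (n.divisors.card : ℝ) * (n : ℝ) ^ (-σ) := by
  have hζ : LSeriesSummable (fun n ↦ (zeta : ArithmeticFunction ℂ) n) σ :=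
    LSeriesSummable_zeta_iff.2 (by simpa using hσ)
  have hζζ (n : ℕ) : (zeta * zeta : ArithmeticFunction ℂ) n = n.divisors.card := by
    rw [← natCoe_mul, natCoe_apply, ← sigma_zero_apply, ← zeta_mul_pow_eq_sigma,
      pow_zero_eq_zeta]
  refine (LSeriesSummable_mul hζ hζ).norm.congr fun n ↦ ?_
  obtain rfl | hn := eq_or_ne n 0
  · simp
  rw [LSeries.norm_term_eq, if_neg hn, hζζ, Complex.norm_natCast, Complex.ofReal_re,
    div_eq_mul_inv, Real.rpow_neg n.cast_nonneg]

theorem summable_card_divisors_natAbs_mul_rpow {σ : ℝ} (hσ : 1 < σ) :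
    Summable fun m : ℤ ↦ (m.natAbs.divisors.card : ℝ) * |(m : ℝ)| ^ (-σ) :=
  .of_nat_of_neg (by simpa using summable_card_divisors_mul_rpow hσ)
    (by simpa using summable_card_divisors_mul_rpow hσ)

end DivisorSums

section SquareRoots

theorem four_mul_mul_sub_eq_zero_of_sq_eq {R : Type*} [CommRing R] {D r y z : R}
    (hr : r ^ 2 = D) (hy : y ^ 2 = D) (hz : z ^ 2 = D)
    (hyz : y - r ∣ z - r) (hzy : z - r ∣ y - r) : 4 * D * (z - y) = 0 := by
  obtain ⟨b, hb⟩ := hyz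
  obtain ⟨c, hc⟩ := hzy
  -- Since `(y - r) * (y + r) = 0`, the multiple `z - r` of `y - r` is also killed by `y + r`.
  have hzyr : (z - r) * (y + r) = 0 := by linear_combination (y + r) * hb + b * (hy - hr)
  have hyzr : (y - r) * (z + r) = 0 := by linear_combination (z + r) * hc + c * (hz - hr)
  linear_combination 2 * r * (hzyr - hyzr) - 4 * (z - y) * hr

theorem zmod_dvd_of_gcd_val_eq {M : ℕ} [NeZero M] {a b : ZMod M}
    (h : a.val.gcd M = b.val.gcd M) : a ∣ b := by
  have ha : a ∣ (b.val.gcd M : ZMod M) := h ▸ ZMod.mul_inv_eq_gcd a ▸ Dvd.intro _ rfl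
  have hb : ((b.val.gcd M : ℕ) : ZMod M) ∣ b := by
    simpa using map_dvd (Nat.castRingHom (ZMod M)) (b.val.gcd_dvd_left M)
  exact ha.trans hb

theorem A_le_mul_card_divisors {M : ℕ} (hM : M ≠ 0) {D : ℤ} (hD : D ≠ 0) :
    A M D ≤ 4 * D.natAbs * M.divisors.card := by
  classical
  have : NeZero M := ⟨hM⟩
  rw [A, Nat.card_eq_fintype_card, Fintype.card_subtype]
  obtain h | ⟨r, hr⟩ := ({x : ZMod M | x ^ 2 = (D : ZMod M)} : Finset _).eq_empty_or_nonempty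
  · simp [h]
  refine Finset.card_le_mul_card_image_of_maps_to (f := fun x ↦ (x - r).val.gcd M)
    (fun x _ ↦ Nat.mem_divisors.2 ⟨Nat.gcd_dvd_right _ _, hM⟩) _ fun d _ ↦ ?_
  obtain h | ⟨y, hy⟩ := (Finset.filter (fun x ↦ (x - r).val.gcd M = d)
    {x : ZMod M | x ^ 2 = (D : ZMod M)}).eq_empty_or_nonempty
  · simp [h]
  refine (Finset.card_le_card_of_injOn (· - y) (fun z hz ↦ ?_) (sub_left_injective.injOn)).trans
    (IsAddCyclic.card_nsmul_eq_zero_le (α := ZMod M) (n := 4 * D.natAbs) (by positivity))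
  simp only [Finset.coe_filter, Finset.mem_filter, Finset.mem_univ, true_and,
    Set.mem_ofPred_eq] at hr hy hz ⊢
  have h4 : 4 * (D : ZMod M) * (z - y) = 0 :=
    four_mul_mul_sub_eq_zero_of_sq_eq hr hy.1 hz.1 (zmod_dvd_of_gcd_val_eq (hy.2.trans hz.2.symm))
      (zmod_dvd_of_gcd_val_eq (hz.2.trans hy.2.symm))
  obtain h | h := Int.natAbs_eq D <;> rw [h] at h4 <;> simpa [nsmul_eq_mul] using h4

theorem A_four_mul_le {n : ℕ} (hn : n ≠ 0) {D : ℤ} (hD : D ≠ 0) :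
    A (4 * n) D ≤ 12 * D.natAbs * n.divisors.card :=
  calc A (4 * n) D ≤ 4 * D.natAbs * (4 * n).divisors.card :=
        A_le_mul_card_divisors (by positivity) hD
    _ ≤ 4 * D.natAbs * (3 * n.divisors.card) := by
        gcongr
        exact card_divisors_mul_le 4 n
    _ = 12 * D.natAbs * n.divisors.card := by ring

end SquareRoots

section Integrals

open scoped ENNReal

theorem lintegral_comp_mul_add (φ : ℝ → ℝ≥0∞) (hφ : Measurable φ) {c : ℝ} (hc : c ≠ 0) (b : ℝ) :
    ∫⁻ u, φ (c * u + b) = ENNReal.ofReal |c⁻¹| * ∫⁻ z, φ z := by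
  calc ∫⁻ u, φ (c * u + b) = ∫⁻ z, φ (z + b) ∂(Measure.map (c * ·) volume) := by
        rw [lintegral_map (by fun_prop) (by fun_prop)]
    _ = ENNReal.ofReal |c⁻¹| * ∫⁻ z, φ z := by
        rw [Real.map_volume_mul_left hc, lintegral_smul_measure, lintegral_add_right_eq_self φ b,
          smul_eq_mul]

theorem setLIntegral_Ioc_comp_mul_add (φ : ℝ → ℝ≥0∞) (hφ : Measurable φ) {c : ℝ} (hc : c ≠ 0)
    (b : ℝ) : ∫⁻ u in Set.Ioc 0 1, φ (c * u + b) =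
      ENNReal.ofReal |c⁻¹| * ∫⁻ z, {z | (z - b) / c ∈ Set.Ioc 0 1}.indicator φ z := by
  have hS : MeasurableSet {z : ℝ | (z - b) / c ∈ Set.Ioc 0 1} :=
    (by fun_prop : Measurable fun z : ℝ ↦ (z - b) / c) measurableSet_Ioc
  rw [← lintegral_comp_mul_add _ (hφ.indicator hS) hc b, ← lintegral_indicator measurableSet_Ioc]
  congr with u
  have hu : (c * u + b - b) / c = u := by field_simp; ring
  simp only [Set.indicator, Set.mem_ofPred_eq, hu]

theorem encard_residues_window_le {M : ℕ} (S : Set (ZMod M)) {c : ℝ} (hc : c ≠ 0) (hcM : |c| ≤ M)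
    (z : ℝ) : {x : ℤ | (x : ZMod M) ∈ S ∧ (z - x) / c ∈ Set.Ioc 0 1}.encard ≤ S.encard := by
  refine Set.encard_le_encard_of_injOn (f := ((↑) : ℤ → ZMod M)) (fun _ hx ↦ hx.1) ?_
  rintro x ⟨-, hx⟩ y ⟨-, hy⟩ hxy
  have hlt : |((y - x : ℤ) : ℝ)| < M := by
    have hdiff : ((y - x : ℤ) : ℝ) = ((z - x) / c - (z - y) / c) * c := by
      push_cast; field_simp; ring
    rw [hdiff, abs_mul]
    refine (mul_lt_of_lt_one_left (abs_pos.2 hc) ?_).trans_le hcM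
    rw [abs_lt]
    constructor <;> linarith [hx.1, hx.2, hy.1, hy.2]
  have hdvd : (M : ℤ) ∣ y - x := (ZMod.intCast_eq_intCast_iff_dvd_sub _ _ _).1 hxy
  have := Int.eq_zero_of_abs_lt_dvd hdvd (by exact_mod_cast hlt)
  omega

theorem tsum_setLIntegral_comp_mul_add_le {M : ℕ} (S : Set (ZMod M)) {c : ℝ} (hc : c ≠ 0)
    (hcM : |c| ≤ M) (φ : ℝ → ℝ≥0∞) (hφ : Measurable φ) :
    ∑' x : {x : ℤ | (x : ZMod M) ∈ S}, ∫⁻ u in Set.Ioc 0 1, φ (c * u + (x : ℤ)) ≤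
      S.encard * (ENNReal.ofReal |c⁻¹| * ∫⁻ z, φ z) := by
  have hwin (x : ℤ) : MeasurableSet {z : ℝ | (z - x) / c ∈ Set.Ioc 0 1} :=
    (by fun_prop : Measurable fun z : ℝ ↦ (z - x) / c) measurableSet_Ioc
  simp_rw [fun x : ℤ ↦ setLIntegral_Ioc_comp_mul_add φ hφ hc x]
  rw [ENNReal.tsum_mul_left, ← lintegral_tsum fun x : {x : ℤ | (x : ZMod M) ∈ S} ↦
    (hφ.indicator (hwin x)).aemeasurable, mul_left_comm, ← lintegral_const_mul _ hφ]
  gcongr with z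
  calc ∑' x : {x : ℤ | (x : ZMod M) ∈ S}, {z | (z - (x : ℤ)) / c ∈ Set.Ioc 0 1}.indicator φ z
      = ∑' _ : {x : ℤ | (x : ZMod M) ∈ S ∧ (z - x) / c ∈ Set.Ioc 0 1}, φ z := by
        rw [tsum_subtype {x : ℤ | (x : ZMod M) ∈ S}
          fun x ↦ {z | (z - (x : ℤ)) / c ∈ Set.Ioc 0 1}.indicator φ z,
          tsum_subtype {x : ℤ | (x : ZMod M) ∈ S ∧ (z - x) / c ∈ Set.Ioc 0 1} fun _ ↦ φ z]
        refine tsum_congr fun x ↦ ?_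
        by_cases hx : (x : ZMod M) ∈ S <;> simp [Set.indicator, hx]
    _ ≤ S.encard * φ z := by
        rw [ENNReal.tsum_const]
        gcongr
        exact_mod_cast encard_residues_window_le S hc hcM z

theorem lintegral_inv_one_add_sq :
    ∫⁻ z : ℝ, ENNReal.ofReal ((1 + z ^ 2)⁻¹) = ENNReal.ofReal Real.pi := by
  rw [← ofReal_integral_eq_lintegral_ofReal integrable_inv_one_add_sq
    (.of_forall fun z ↦ by positivity), integral_univ_inv_one_add_sq]

theorem setLIntegral_prod_ofReal_mul {α β : Type*} [MeasureSpace α] [MeasureSpace β]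
    [SFinite (volume : Measure α)] [SFinite (volume : Measure β)] {s : Set α} {t : Set β}
    (hs : MeasurableSet s) (ht : MeasurableSet t) {f : α → ℝ} {g : β → ℝ} (hf : Measurable f)
    (hg : Measurable g) (hf0 : ∀ x ∈ s, 0 ≤ f x) :
    ∫⁻ p in s ×ˢ t, ENNReal.ofReal (f p.1 * g p.2) =
      (∫⁻ x in s, ENNReal.ofReal (f x)) * ∫⁻ y in t, ENNReal.ofReal (g y) := by
  rw [setLIntegral_congr_fun (g := fun p ↦ ENNReal.ofReal (f p.1) * ENNReal.ofReal (g p.2))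
    (hs.prod ht) fun p hp ↦ ENNReal.ofReal_mul (hf0 _ hp.1), Measure.volume_eq_prod,
    ← Measure.prod_restrict, lintegral_prod_mul (f := fun x ↦ ENNReal.ofReal (f x))
      (g := fun y ↦ ENNReal.ofReal (g y)) (by fun_prop) (by fun_prop)]

end Integrals

section Forms

/-- The discriminant of the binary quadratic form with coefficients `x`. -/
def formDiscr {R : Type*} [Ring R] (x : R × R × R) : R := discrim x.1 x.2.1 x.2.2

theorem formDiscr_rhoAct (a c d : ℝ) (x : ℝ × ℝ × ℝ) :
    formDiscr (rhoAct a c d x) = (a * d) ^ 2 * formDiscr x := by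
  simp only [formDiscr, discrim, rhoAct]
  ring

theorem rhoAct_mul_smul (κ k a c d : ℝ) (x : ℝ × ℝ × ℝ) :
    rhoAct (κ * a) (κ * c) (κ * d) (k • x) = (κ ^ 2 * k) • rhoAct a c d x := by
  simp only [rhoAct, Prod.smul_mk, Prod.smul_fst, Prod.smul_snd, smul_eq_mul, Prod.mk.injEq]
  refine ⟨?_, ?_, ?_⟩ <;> ring

theorem abs_formDiscr_le (x : ℝ × ℝ × ℝ) : |formDiscr x| ≤ 5 * ‖x‖ ^ 2 := by
  have h₁ : |x.1| ≤ ‖x‖ := norm_fst_le x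
  have h₂ : |x.2.1| ≤ ‖x‖ := (norm_fst_le x.2).trans (norm_snd_le x)
  have h₃ : |x.2.2| ≤ ‖x‖ := (norm_snd_le x.2).trans (norm_snd_le x)
  calc |formDiscr x| ≤ |x.2.1 ^ 2| + |4 * x.1 * x.2.2| := abs_sub _ _
    _ = |x.2.1| ^ 2 + 4 * |x.1| * |x.2.2| := by rw [abs_pow, abs_mul, abs_mul, Nat.abs_ofNat]
    _ ≤ ‖x‖ ^ 2 + 4 * ‖x‖ * ‖x‖ := by gcongr
    _ = 5 * ‖x‖ ^ 2 := by ring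

theorem sq_mul_abs_fst_le_norm_rhoAct (a c d : ℝ) (x : ℝ × ℝ × ℝ) :
    a ^ 2 * |x.1| ≤ ‖rhoAct a c d x‖ :=
  calc a ^ 2 * |x.1| = |(rhoAct a c d x).1| := by simp [rhoAct, abs_mul]
    _ ≤ ‖rhoAct a c d x‖ := norm_fst_le (rhoAct a c d x)

theorem abs_two_mul_add_le_norm_rhoAct {t : ℝ} (ht : t ≠ 0) (u : ℝ) (x : ℝ × ℝ × ℝ) :
    |2 * x.1 * u + x.2.1| ≤ ‖rhoAct t (u / t) (1 / t) x‖ :=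
  calc |2 * x.1 * u + x.2.1| = |(rhoAct t (u / t) (1 / t) x).2.1| := by
        simp only [rhoAct]
        field_simp
    _ ≤ ‖(rhoAct t (u / t) (1 / t) x).2‖ := norm_fst_le (rhoAct t (u / t) (1 / t) x).2
    _ ≤ ‖rhoAct t (u / t) (1 / t) x‖ := norm_snd_le (rhoAct t (u / t) (1 / t) x)

theorem abs_formDiscr_le_norm_rhoAct {t : ℝ} (ht : t ≠ 0) (c : ℝ) (x : ℝ × ℝ × ℝ) :
    |formDiscr x| ≤ 5 * ‖rhoAct t c (1 / t) x‖ ^ 2 := by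
  simpa only [formDiscr_rhoAct, mul_one_div_cancel ht, one_pow, one_mul] using
    abs_formDiscr_le (rhoAct t c (1 / t) x)

end Forms

section Decay

/-- Rapid decay: `f` decays faster than every power of the norm. Unlike for Schwartz functions,
nothing is required of derivatives. -/
def HasRapidDecay {E F : Type*} [Norm E] [Norm F] (f : E → F) : Prop :=
  ∀ n : ℕ, ∃ C : ℝ, ∀ v, (1 + ‖v‖) ^ n * ‖f v‖ ≤ C

theorem hasRapidDecay_schwartzMap {E F : Type*} [NormedAddCommGroup E] [NormedSpace ℝ E]
    [NormedAddCommGroup F] [NormedSpace ℝ F] (f : SchwartzMap E F) : HasRapidDecay f := fun n ↦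
  ⟨_, fun v ↦ by
    simpa only [norm_iteratedFDeriv_zero] using
      SchwartzMap.one_add_le_sup_seminorm_apply (𝕜 := ℝ) (m := (n, 0)) le_rfl le_rfl f v⟩

theorem HasRapidDecay.exists_norm_le_prod {E₁ E₂ F : Type*} [SeminormedAddGroup E₁]
    [SeminormedAddGroup E₂] [SeminormedAddGroup F] {f : E₁ × E₂ → F} (hf : HasRapidDecay f)
    (m n : ℕ) :
    ∃ C : ℝ, 0 ≤ C ∧ ∀ x y, ‖f (x, y)‖ ≤ C * (((1 + ‖x‖) ^ m)⁻¹ * ((1 + ‖y‖) ^ n)⁻¹) := by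
  obtain ⟨C, hC⟩ := hf (m + n)
  have hC' (x : E₁) (y : E₂) : (1 + ‖x‖) ^ m * (1 + ‖y‖) ^ n * ‖f (x, y)‖ ≤ C := by
    refine le_trans ?_ (hC (x, y))
    rw [pow_add]
    gcongr
    exacts [norm_fst_le (x, y), norm_snd_le (x, y)]
  refine ⟨C, le_trans (by positivity) (hC' 0 0), fun x y ↦ ?_⟩
  rw [← mul_inv, ← div_eq_mul_inv, le_div_iff₀' (by positivity)]
  exact hC' x y

theorem inv_one_add_norm_rhoAct_le {l σ t : ℝ} {n M : ℕ} (u : ℝ) (x : ℝ × ℝ × ℝ) (hl : 1 ≤ l)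
    (ht : 0 < t) (hσ : σ ≤ n) (hx : formDiscr x ≠ 0) :
    ((1 + ‖l • rhoAct t (u / t) (1 / t) x‖) ^ (2 * M + n + 2))⁻¹ ≤
      5 ^ M * ((l ^ 2 * |formDiscr x|) ^ M)⁻¹ *
        (1 + t ^ 2 * |x.1|) ^ (-σ) * (1 + (2 * x.1 * u + x.2.1) ^ 2)⁻¹ := by
  set N := ‖rhoAct t (u / t) (1 / t) x‖ with hN
  have hl0 : 0 < l := one_pos.trans_le hl
  have hNl : N ≤ l * N := le_mul_of_one_le_left (norm_nonneg _) hl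
  have hN0 : 0 ≤ l * N := mul_nonneg hl0.le (norm_nonneg _)
  have hlead : t ^ 2 * |x.1| ≤ l * N := (sq_mul_abs_fst_le_norm_rhoAct _ _ _ _).trans hNl
  have hmid : |2 * x.1 * u + x.2.1| ≤ l * N :=
    (abs_two_mul_add_le_norm_rhoAct ht.ne' u x).trans hNl
  have hdiscr : l ^ 2 * |formDiscr x| ≤ 5 * (1 + l * N) ^ 2 :=
    calc l ^ 2 * |formDiscr x| ≤ l ^ 2 * (5 * N ^ 2) := by
          gcongr
          exact abs_formDiscr_le_norm_rhoAct ht.ne' _ x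
      _ = 5 * (l * N) ^ 2 := by ring
      _ ≤ 5 * (1 + l * N) ^ 2 := by gcongr; exact le_add_of_nonneg_left one_pos.le
  have hscale : ((1 + l * N) ^ (2 * M))⁻¹ ≤ 5 ^ M * ((l ^ 2 * |formDiscr x|) ^ M)⁻¹ := by
    rw [← div_eq_mul_inv, inv_le_comm₀ (by positivity) (by positivity), inv_div,
      div_le_iff₀' (by positivity), pow_mul, ← mul_pow]
    exact pow_le_pow_left₀ (by positivity) hdiscr M
  have htorus : ((1 + l * N) ^ n)⁻¹ ≤ (1 + t ^ 2 * |x.1|) ^ (-σ) := by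
    rw [Real.rpow_neg (by positivity)]
    gcongr
    calc (1 + t ^ 2 * |x.1|) ^ σ ≤ (1 + t ^ 2 * |x.1|) ^ (n : ℝ) :=
          Real.rpow_le_rpow_of_exponent_le (le_add_of_nonneg_right (by positivity)) hσ
      _ = (1 + t ^ 2 * |x.1|) ^ n := Real.rpow_natCast _ _
      _ ≤ (1 + l * N) ^ n := pow_le_pow_left₀ (by positivity) (by gcongr) n
  have hshear : ((1 + l * N) ^ 2)⁻¹ ≤ (1 + (2 * x.1 * u + x.2.1) ^ 2)⁻¹ := by
    gcongr
    nlinarith [sq_le_sq' (neg_le_of_abs_le hmid) (le_of_abs_le hmid)]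
  rw [norm_smul, Real.norm_of_nonneg hl0.le, ← hN, pow_add, pow_add, mul_inv, mul_inv]
  gcongr

end Decay

section BlockWeights

open scoped ENNReal

/-- The weight in the torus variable `t` that bounds the part of the integrand belonging to one of
the two forms: the power `t ^ (2 * σ - 3)`, which includes the Haar factor `t⁻³`, times the decay in
the leading coefficient `t ^ 2 * m` of the translated form, where `m = |x₁|`. -/
def torusWeight (σ m t : ℝ) : ℝ := t ^ (2 * σ - 3) * (1 + t ^ 2 * m) ^ (-σ)

theorem measurable_torusWeight (σ m : ℝ) : Measurable (torusWeight σ m) := by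
  unfold torusWeight
  fun_prop

theorem torusWeight_nonneg {σ m t : ℝ} (hm : 0 ≤ m) (ht : 0 ≤ t) : 0 ≤ torusWeight σ m t := by
  unfold torusWeight
  positivity

theorem hasDerivAt_torusWeight_primitive {σ m t : ℝ} (hσ : σ ≠ 1) (hm : 0 ≤ m) (ht : 0 < t) :
    HasDerivAt (fun t ↦ (t ^ 2 / (1 + t ^ 2 * m)) ^ (σ - 1) / (2 * (σ - 1)))
      (torusWeight σ m t) t := by
  have hq : 0 < 1 + t ^ 2 * m := by positivity
  have hbase : HasDerivAt (fun t ↦ t ^ 2 / (1 + t ^ 2 * m)) (2 * t / (1 + t ^ 2 * m) ^ 2) t := by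
    refine ((hasDerivAt_pow 2 t).fun_div
      (((hasDerivAt_pow 2 t).mul_const m).const_add 1) hq.ne').congr_deriv ?_
    push_cast
    ring
  have hpow : (t ^ 2 / (1 + t ^ 2 * m)) ^ (σ - 1 - 1) =
      t ^ (2 * σ - 3) / t * ((1 + t ^ 2 * m) ^ (-σ) * (1 + t ^ 2 * m) ^ 2) := by
    rw [Real.div_rpow (by positivity) hq.le, ← Real.rpow_natCast_mul ht.le, div_eq_mul_inv,
      ← Real.rpow_neg hq.le, ← Real.rpow_sub_one ht.ne', ← Real.rpow_add_natCast hq.ne']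
    push_cast
    ring_nf
  refine ((hbase.rpow_const (.inl (by positivity))).div_const _).congr_deriv ?_
  have := sub_ne_zero.2 hσ
  rw [hpow, torusWeight]
  field_simp

theorem tendsto_sq_div_one_add_sq_mul_atTop {m : ℝ} (hm : m ≠ 0) :
    Filter.Tendsto (fun t : ℝ ↦ t ^ 2 / (1 + t ^ 2 * m)) Filter.atTop (nhds m⁻¹) := by
  have hinv : Filter.Tendsto (fun t : ℝ ↦ ((t ^ 2)⁻¹ + m)⁻¹) Filter.atTop (nhds (0 + m)⁻¹) :=
    ((tendsto_inv_atTop_zero.comp (Filter.tendsto_pow_atTop two_ne_zero)).add_const m).inv₀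
      (by simpa using hm)
  rw [zero_add] at hinv
  refine hinv.congr' ?_
  filter_upwards [Filter.eventually_gt_atTop 0] with t ht
  rw [← inv_div (1 + t ^ 2 * m), add_div, mul_div_cancel_left₀ _ (by positivity), one_div]

theorem setLIntegral_torusWeight {σ m : ℝ} (hσ : 1 < σ) (hm : 0 < m) :
    ∫⁻ t in Set.Ioi 0, ENNReal.ofReal (torusWeight σ m t) =
      ENNReal.ofReal (m⁻¹ ^ (σ - 1) / (2 * (σ - 1))) := by
  set F : ℝ → ℝ := fun t ↦ (t ^ 2 / (1 + t ^ 2 * m)) ^ (σ - 1) / (2 * (σ - 1)) with hF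
  have hcont : ContinuousWithinAt F (Set.Ici 0) 0 := by
    refine ContinuousAt.continuousWithinAt ?_
    exact (ContinuousAt.rpow_const (by fun_prop (disch := simp)) (.inr (by linarith))).div_const _
  have hderiv : ∀ t ∈ Set.Ioi (0 : ℝ), HasDerivAt F (torusWeight σ m t) t := fun t ht ↦
    hasDerivAt_torusWeight_primitive hσ.ne' hm.le ht
  have hnonneg : ∀ t ∈ Set.Ioi (0 : ℝ), 0 ≤ torusWeight σ m t := fun t ht ↦
    torusWeight_nonneg hm.le (le_of_lt ht)
  have hlim : Filter.Tendsto F Filter.atTop (nhds (m⁻¹ ^ (σ - 1) / (2 * (σ - 1)))) :=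
    ((tendsto_sq_div_one_add_sq_mul_atTop hm.ne').rpow_const
      (.inl (inv_ne_zero hm.ne'))).div_const _
  have hF0 : F 0 = 0 := by simp [hF, Real.zero_rpow (sub_ne_zero.2 hσ.ne')]
  rw [← ofReal_integral_eq_lintegral_ofReal
    (integrableOn_Ioi_deriv_of_nonneg hcont hderiv hnonneg hlim)
    (ae_restrict_of_forall_mem measurableSet_Ioi hnonneg),
    integral_Ioi_of_hasDerivAt_of_nonneg hcont hderiv hnonneg hlim, hF0, sub_zero]

/-- The weight in the unipotent variable `u` that bounds the part of the integrand belonging to one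
of the two forms; `2 * m * u + b` is the middle coefficient of the form `(m, b, _)` translated by
`u`. -/
def shearWeight (m b : ℤ) (u : ℝ) : ℝ := (1 + (2 * m * u + b) ^ 2)⁻¹

theorem measurable_shearWeight (m b : ℤ) : Measurable (shearWeight m b) := by
  unfold shearWeight
  fun_prop

theorem shearWeight_nonneg (m b : ℤ) (u : ℝ) : 0 ≤ shearWeight m b u := by
  unfold shearWeight
  positivity

theorem setOf_four_mul_dvd_sq_sub (m D : ℤ) :
    {b : ℤ | 4 * m ∣ b ^ 2 - D} =
      {b : ℤ | (b : ZMod (4 * m.natAbs)) ∈ {r : ZMod (4 * m.natAbs) | r ^ 2 = D}} := by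
  ext b
  have habs : ((4 * m.natAbs : ℕ) : ℤ) = |4 * m| := by simp [abs_mul]
  rw [Set.mem_ofPred_eq, Set.mem_ofPred_eq, Set.mem_ofPred_eq, ← abs_dvd, ← habs,
    ← ZMod.intCast_eq_intCast_iff_dvd_sub, eq_comm, Int.cast_pow]

theorem encard_sq_eq_intCast (M : ℕ) [NeZero M] (D : ℤ) :
    {r : ZMod M | r ^ 2 = D}.encard = A M D :=
  (Set.toFinite _).cast_ncard_eq.symm

theorem tsum_setLIntegral_shearWeight_le {m D : ℤ} (hm : m ≠ 0) (hD : D ≠ 0) :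
    ∑' b : {b : ℤ | 4 * m ∣ b ^ 2 - D}, ∫⁻ u in Set.Ioc 0 1, ENNReal.ofReal (shearWeight m b u) ≤
      ENNReal.ofReal (6 * Real.pi * |(D : ℝ)| * (m.natAbs.divisors.card * |(m : ℝ)|⁻¹)) := by
  have : NeZero (4 * m.natAbs) := ⟨by simpa using hm⟩
  have hA : (A (4 * m.natAbs) D : ℝ) ≤ 12 * |(D : ℝ)| * m.natAbs.divisors.card := by
    rw [← Int.cast_abs, ← Nat.cast_natAbs]
    exact_mod_cast A_four_mul_le (Int.natAbs_ne_zero.2 hm) hD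
  rw [setOf_four_mul_dvd_sq_sub]
  calc _ ≤ ({r : ZMod (4 * m.natAbs) | r ^ 2 = D}.encard : ℝ≥0∞) *
          (ENNReal.ofReal |(2 * m : ℝ)⁻¹| * ∫⁻ z : ℝ, ENNReal.ofReal ((1 + z ^ 2)⁻¹)) := by
        refine tsum_setLIntegral_comp_mul_add_le _ (by positivity) ?_
          (fun z ↦ ENNReal.ofReal ((1 + z ^ 2)⁻¹)) (by fun_prop)
        rw [abs_mul, abs_two, Nat.cast_mul, Nat.cast_natAbs, Int.cast_abs]
        gcongr
        norm_num
    _ = ENNReal.ofReal (A (4 * m.natAbs) D * ((2 * |(m : ℝ)|)⁻¹ * Real.pi)) := by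
        rw [lintegral_inv_one_add_sq, encard_sq_eq_intCast, ENat.toENNReal_coe,
          ← ENNReal.ofReal_natCast, ← ENNReal.ofReal_mul (by positivity),
          ← ENNReal.ofReal_mul (by positivity), abs_inv, abs_mul, abs_two]
    _ ≤ ENNReal.ofReal (12 * |(D : ℝ)| * m.natAbs.divisors.card *
          ((2 * |(m : ℝ)|)⁻¹ * Real.pi)) := by gcongr
    _ = _ := by
        congr 1
        ring

end BlockWeights

section RootPairs

open scoped ENNReal

/-- The pairs `(x₁, x₂)` with `x₁ ≠ 0` that complete, by a unique `x₃`, to an integral form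
`(x₁, x₂, x₃)` of discriminant `D`. -/
def rootPairs (D : ℤ) : Set (ℤ × ℤ) := {q | q.1 ≠ 0 ∧ 4 * q.1 ∣ q.2 ^ 2 - D}

/-- The integral over the torus and unipotent variables of the weights that bound the contribution
of a form with leading coefficients `q = (x₁, x₂)`. -/
def blockIntegral (σ : ℝ) (q : ℤ × ℤ) : ℝ≥0∞ :=
  (∫⁻ t in Set.Ioi 0, ENNReal.ofReal (torusWeight σ |(q.1 : ℝ)| t)) *
    ∫⁻ u in Set.Ioc 0 1, ENNReal.ofReal (shearWeight q.1 q.2 u)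

theorem tsum_rootPairs (D : ℤ) (F : ℤ × ℤ → ℝ≥0∞) :
    ∑' q : rootPairs D, F q =
      ∑' m : ℤ, if m = 0 then 0 else ∑' b : {b : ℤ | 4 * m ∣ b ^ 2 - D}, F (m, b) := by
  rw [tsum_subtype, ENNReal.tsum_prod']
  refine tsum_congr fun m ↦ ?_
  split_ifs with hm
  · simp [rootPairs, hm]
  · rw [tsum_subtype _ fun b ↦ F (m, b)]
    simp [rootPairs, Set.indicator, hm]

theorem tsum_blockIntegral_le {σ : ℝ} (hσ : 1 < σ) {m D : ℤ} (hm : m ≠ 0) (hD : D ≠ 0) :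
    ∑' b : {b : ℤ | 4 * m ∣ b ^ 2 - D}, blockIntegral σ (m, b) ≤
      ENNReal.ofReal (3 * Real.pi / (σ - 1) * |(D : ℝ)| *
        (m.natAbs.divisors.card * |(m : ℝ)| ^ (-σ))) := by
  have hm0 : 0 < |(m : ℝ)| := by positivity
  have hσ0 : 0 < σ - 1 := sub_pos.2 hσ
  calc ∑' b : {b : ℤ | 4 * m ∣ b ^ 2 - D}, blockIntegral σ (m, b)
      ≤ ENNReal.ofReal (|(m : ℝ)|⁻¹ ^ (σ - 1) / (2 * (σ - 1))) *
          ENNReal.ofReal (6 * Real.pi * |(D : ℝ)| * (m.natAbs.divisors.card * |(m : ℝ)|⁻¹)) := by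
        simp_rw [blockIntegral]
        rw [ENNReal.tsum_mul_left, setLIntegral_torusWeight hσ hm0]
        gcongr
        exact tsum_setLIntegral_shearWeight_le hm hD
    _ = _ := by
        have hpow : |(m : ℝ)|⁻¹ ^ (σ - 1) * |(m : ℝ)|⁻¹ = |(m : ℝ)| ^ (-σ) := by
          rw [← Real.rpow_add_one (by positivity), sub_add_cancel, Real.inv_rpow hm0.le,
            Real.rpow_neg hm0.le]
        rw [← ENNReal.ofReal_mul (by positivity), ← hpow]
        congr 1
        field_simp
        ring

theorem exists_tsum_rootPairs_blockIntegral_le {σ : ℝ} (hσ : 1 < σ) :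
    ∃ c : ℝ, 0 ≤ c ∧ ∀ D : ℤ, D ≠ 0 →
      ∑' q : rootPairs D, blockIntegral σ q ≤ ENNReal.ofReal (c * |(D : ℝ)|) := by
  have : 0 < σ - 1 := sub_pos.2 hσ
  refine ⟨3 * Real.pi / (σ - 1) * ∑' m : ℤ, m.natAbs.divisors.card * |(m : ℝ)| ^ (-σ),
    mul_nonneg (by positivity) (tsum_nonneg fun m ↦ by positivity), fun D hD ↦ ?_⟩
  rw [tsum_rootPairs, mul_right_comm, ← tsum_mul_left, ENNReal.ofReal_tsum_of_nonneg
    (fun m ↦ by positivity) ((summable_card_divisors_natAbs_mul_rpow hσ).mul_left _)]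
  refine ENNReal.tsum_le_tsum fun m ↦ ?_
  split_ifs with hm
  · exact zero_le
  · exact tsum_blockIntegral_le hσ hm hD

/-- The common discriminant of a point of `L'` together with the leading and middle coefficients
of its two forms; these data determine the point. -/
def discrRoots (x : Lset) : Σ D : {D : ℤ // D ≠ 0}, rootPairs D × rootPairs D :=
  have hx := x.2.1
  have hne := mul_ne_zero_iff.1 x.2.2
  have hne₁ := mul_ne_zero_iff.1 hne.1
  ⟨⟨formDiscr x.1.1, hne.2⟩,
    ⟨(x.1.1.1, x.1.1.2.1), hne₁.1, x.1.1.2.2, by simp [formDiscr, discrim]⟩,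
    ⟨(x.1.2.1, x.1.2.2.1), hne₁.2, x.1.2.2.2, by simp [formDiscr, discrim, hx]⟩⟩

theorem discrRoots_injective : Function.Injective discrRoots := by
  rintro ⟨⟨⟨x₁, x₂, x₃⟩, y₁, y₂, y₃⟩, hx⟩ ⟨⟨⟨x₁', x₂', x₃'⟩, y₁', y₂', y₃'⟩, hx'⟩ h
  have hdata := congrArg (fun z ↦ (z.1.1, z.2.1.1, z.2.2.1)) h
  simp only [discrRoots, formDiscr, discrim, Prod.mk.injEq] at hdata
  obtain ⟨hD, ⟨rfl, rfl⟩, rfl, rfl⟩ := hdata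
  have hne := mul_ne_zero_iff.1 (mul_ne_zero_iff.1 hx.2).1
  have h₃ : x₃ = x₃' := mul_left_cancel₀ (mul_ne_zero four_ne_zero hne.1) (sub_right_injective hD)
  have h₃' : y₃ = y₃' := mul_left_cancel₀ (mul_ne_zero four_ne_zero hne.2)
    (sub_right_injective (hx.1.symm.trans (hD.trans hx'.1)))
  rw [Subtype.mk.injEq, h₃, h₃']

theorem tsum_Lset_le (g : ℤ → ℝ≥0∞) (F G : ℤ × ℤ → ℝ≥0∞) :
    ∑' x : Lset, g (formDiscr x.1.1) * (F (x.1.1.1, x.1.1.2.1) * G (x.1.2.1, x.1.2.2.1)) ≤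
      ∑' D : {D : ℤ // D ≠ 0}, g D * ((∑' q : rootPairs D, F q) * ∑' q : rootPairs D, G q) := by
  calc _ ≤ ∑' z : Σ D : {D : ℤ // D ≠ 0}, rootPairs D × rootPairs D,
          g z.1 * (F z.2.1 * G z.2.2) :=
        ENNReal.tsum_comp_le_tsum_of_injective discrRoots_injective _
    _ = _ := by
        simp_rw [ENNReal.tsum_sigma', ENNReal.tsum_prod', ENNReal.tsum_mul_left,
          ENNReal.tsum_mul_right]

theorem summable_inv_sq_intCast : Summable fun D : ℤ ↦ ((D : ℝ) ^ 2)⁻¹ := by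
  simpa using Real.summable_one_div_int_pow.2 one_lt_two

theorem tsum_Lset_blockIntegral_lt_top {σ₁ σ₂ : ℝ} (h₁ : 1 < σ₁) (h₂ : 1 < σ₂) :
    ∑' x : Lset, ENNReal.ofReal (((formDiscr x.1.1 : ℤ) : ℝ) ^ 4)⁻¹ *
      (blockIntegral σ₁ (x.1.1.1, x.1.1.2.1) * blockIntegral σ₂ (x.1.2.1, x.1.2.2.1)) < ⊤ := by
  obtain ⟨c₁, hc₁, hle₁⟩ := exists_tsum_rootPairs_blockIntegral_le h₁
  obtain ⟨c₂, -, hle₂⟩ := exists_tsum_rootPairs_blockIntegral_le h₂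
  calc _ ≤ ∑' D : {D : ℤ // D ≠ 0}, ENNReal.ofReal (((D : ℤ) : ℝ) ^ 4)⁻¹ *
          ((∑' q : rootPairs D, blockIntegral σ₁ q) * ∑' q : rootPairs D, blockIntegral σ₂ q) :=
        tsum_Lset_le (fun D ↦ ENNReal.ofReal ((D : ℝ) ^ 4)⁻¹) _ _
    _ ≤ ∑' D : {D : ℤ // D ≠ 0}, ENNReal.ofReal (c₁ * c₂ * (((D : ℤ) : ℝ) ^ 2)⁻¹) := by
        refine ENNReal.tsum_le_tsum fun ⟨D, hD⟩ ↦ ?_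
        grw [hle₁ D hD, hle₂ D hD]
        rw [← ENNReal.ofReal_mul (by positivity), ← ENNReal.ofReal_mul (by positivity)]
        refine ENNReal.ofReal_le_ofReal (le_of_eq ?_)
        rw [mul_mul_mul_comm, abs_mul_abs_self]
        field_simp
    _ < ⊤ := ((summable_inv_sq_intCast.mul_left _).comp_injective
          Subtype.val_injective).tsum_ofReal_lt_top

end RootPairs

section Majorant

open scoped ENNReal

/-- Up to the factors depending on `k` and on the discriminant, the bound for the term of the
integrand belonging to `k` and `x`. -/
def majorant (κ σ₁ σ₂ : ℝ) (x : (ℤ × ℤ × ℤ) × (ℤ × ℤ × ℤ)) (p : Param) : ℝ :=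
  p.1 ^ κ * (torusWeight σ₁ |(x.1.1 : ℝ)| p.2.1 * (torusWeight σ₂ |(x.2.1 : ℝ)| p.2.2.1 *
    (shearWeight x.1.1 x.1.2.1 p.2.2.2.1 * shearWeight x.2.1 x.2.2.1 p.2.2.2.2)))

theorem measurable_majorant (κ σ₁ σ₂ : ℝ) (x : (ℤ × ℤ × ℤ) × (ℤ × ℤ × ℤ)) :
    Measurable (majorant κ σ₁ σ₂ x) := by
  unfold majorant torusWeight shearWeight
  fun_prop

theorem setLIntegral_majorant (κ σ₁ σ₂ : ℝ) (x : (ℤ × ℤ × ℤ) × (ℤ × ℤ × ℤ)) :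
    ∫⁻ p in ZplusDomain, ENNReal.ofReal (majorant κ σ₁ σ₂ x p) =
      (∫⁻ μ in Set.Ici 1, ENNReal.ofReal (μ ^ κ)) *
        (blockIntegral σ₁ (x.1.1, x.1.2.1) * blockIntegral σ₂ (x.2.1, x.2.2.1)) := by
  have hT (σ : ℝ) (m : ℝ) := measurable_torusWeight σ m
  have hS (m b : ℤ) := measurable_shearWeight m b
  have hT0 (σ : ℝ) (m : ℤ) (t : ℝ) (ht : t ∈ Set.Ioi 0) : 0 ≤ torusWeight σ |(m : ℝ)| t :=
    torusWeight_nonneg (abs_nonneg _) (le_of_lt ht)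
  unfold majorant ZplusDomain
  rw [setLIntegral_prod_ofReal_mul (f := fun μ ↦ μ ^ κ) (g := fun p : ℝ × ℝ × ℝ × ℝ ↦
      torusWeight σ₁ |(x.1.1 : ℝ)| p.1 * (torusWeight σ₂ |(x.2.1 : ℝ)| p.2.1 *
        (shearWeight x.1.1 x.1.2.1 p.2.2.1 * shearWeight x.2.1 x.2.2.1 p.2.2.2)))
      measurableSet_Ici (by measurability) (by fun_prop) (by fun_prop)
      fun μ hμ ↦ Real.rpow_nonneg (zero_le_one.trans hμ) κ,
    setLIntegral_prod_ofReal_mul (g := fun p : ℝ × ℝ × ℝ ↦ torusWeight σ₂ |(x.2.1 : ℝ)| p.1 *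
        (shearWeight x.1.1 x.1.2.1 p.2.1 * shearWeight x.2.1 x.2.2.1 p.2.2))
      measurableSet_Ioi (by measurability) (hT _ _) (by fun_prop) (hT0 _ _),
    setLIntegral_prod_ofReal_mul (g := fun p : ℝ × ℝ ↦
        shearWeight x.1.1 x.1.2.1 p.1 * shearWeight x.2.1 x.2.2.1 p.2)
      measurableSet_Ioi (by measurability) (hT _ _) (by fun_prop) (hT0 _ _),
    setLIntegral_prod_ofReal_mul measurableSet_Ioc measurableSet_Ioc (hS _ _) (hS _ _)
      fun u _ ↦ shearWeight_nonneg _ _ u, blockIntegral, blockIntegral]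
  ring

theorem measurableSet_ZplusDomain : MeasurableSet ZplusDomain := by
  unfold ZplusDomain
  measurability

theorem setLIntegral_Ici_rpow_lt_top {κ : ℝ} (hκ : κ < -1) :
    ∫⁻ μ in Set.Ici (1 : ℝ), ENNReal.ofReal (μ ^ κ) < ⊤ := by
  rw [setLIntegral_congr Ioi_ae_eq_Ici.symm]
  exact (integrableOn_Ioi_rpow_of_lt hκ one_pos).lintegral_lt_top

theorem tsum_pnat_ofReal_inv_sq_lt_top : ∑' k : ℕ+, ENNReal.ofReal ((k : ℝ) ^ 2)⁻¹ < ⊤ :=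
  ((Real.summable_nat_pow_inv.2 one_lt_two).comp_injective PNat.coe_injective).tsum_ofReal_lt_top

theorem setLIntegral_tsum_majorant_lt_top {κ σ₁ σ₂ : ℝ} (hκ : κ < -1) (h₁ : 1 < σ₁) (h₂ : 1 < σ₂) :
    ∫⁻ p in ZplusDomain, ∑' (k : ℕ+) (x : Lset), ENNReal.ofReal ((k : ℝ) ^ 2)⁻¹ *
      (ENNReal.ofReal (((formDiscr x.1.1 : ℤ) : ℝ) ^ 4)⁻¹ *
        ENNReal.ofReal (majorant κ σ₁ σ₂ x p)) < ⊤ := by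
  have hmeas (x : Lset) : Measurable fun p ↦ ENNReal.ofReal (majorant κ σ₁ σ₂ x p) :=
    (measurable_majorant κ σ₁ σ₂ x).ennreal_ofReal
  simp_rw [ENNReal.tsum_mul_left, ENNReal.tsum_mul_right]
  rw [lintegral_const_mul _ (.tsum fun x ↦ (hmeas x).const_mul _),
    lintegral_tsum fun x ↦ ((hmeas x).const_mul _).aemeasurable]
  simp_rw [lintegral_const_mul _ (hmeas _), setLIntegral_majorant,
    mul_left_comm _ (∫⁻ μ in Set.Ici 1, ENNReal.ofReal (μ ^ κ)), ENNReal.tsum_mul_left]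
  exact ENNReal.mul_lt_top tsum_pnat_ofReal_inv_sq_lt_top
    (ENNReal.mul_lt_top (setLIntegral_Ici_rpow_lt_top hκ) (tsum_Lset_blockIntegral_lt_top h₁ h₂))

end Majorant

section Integrand

/-- The factor of the integrand of `Z₊` in front of the lattice sum, with the Haar weight. -/
def zetaWeight (s₁ s₂ w : ℂ) (p : Param) : ℂ :=
  ((p.1 ^ 2 * p.2.1 ^ 2 : ℝ) : ℂ) ^ s₁ * ((p.1 ^ 2 * p.2.2.1 ^ 2 : ℝ) : ℂ) ^ s₂ *
    ((p.1 : ℝ) : ℂ) ^ (4 * w) * (((p.2.1 ^ 3 * p.2.2.1 ^ 3 * p.1)⁻¹ : ℝ) : ℂ)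

theorem Zintegrand_eq_zetaWeight_mul (f : Vsp → ℂ) (s₁ s₂ w : ℂ) (p : Param) :
    Zintegrand f s₁ s₂ w p = zetaWeight s₁ s₂ w p * latticeSum f p :=
  mul_right_comm _ _ _

theorem measurable_Zintegrand {f : Vsp → ℂ} (hf : Measurable f) (s₁ s₂ w : ℂ) :
    Measurable (Zintegrand f s₁ s₂ w) := by
  have hact (q : Vsp) : Measurable fun p ↦ act p q := by
    unfold act rhoAct
    fun_prop
  have hsum : Measurable (latticeSum f) := by
    unfold latticeSum
    fun_prop
  unfold Zintegrand
  fun_prop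

theorem norm_zetaWeight (s₁ s₂ w : ℂ) {μ t s : ℝ} (hμ : 0 < μ) (ht : 0 < t) (hs : 0 < s)
    (u v : ℝ) : ‖zetaWeight s₁ s₂ w (μ, t, s, u, v)‖ =
      μ ^ (2 * s₁.re + 2 * s₂.re + 4 * w.re - 1) *
        (t ^ (2 * s₁.re - 3) * s ^ (2 * s₂.re - 3)) := by
  have hsq {z : ℝ} (hz : 0 < z) (σ : ℝ) : (z ^ 2) ^ σ = z ^ (2 * σ) := by
    exact_mod_cast (Real.rpow_natCast_mul hz.le 2 σ).symm
  have hw : (4 * w).re = 4 * w.re := by simp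
  rw [zetaWeight, norm_mul, norm_mul, norm_mul, Complex.norm_cpow_eq_rpow_re_of_pos (by positivity),
    Complex.norm_cpow_eq_rpow_re_of_pos (by positivity), Complex.norm_cpow_eq_rpow_re_of_pos hμ,
    Complex.norm_of_nonneg (by positivity), Real.mul_rpow (by positivity) (by positivity),
    Real.mul_rpow (by positivity) (by positivity), hsq hμ, hsq hμ, hsq ht, hsq hs, hw,
    Real.rpow_sub_one hμ.ne', Real.rpow_add hμ, Real.rpow_add hμ, Real.rpow_sub ht,
    Real.rpow_sub hs, Real.rpow_ofNat, Real.rpow_ofNat]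
  field_simp

theorem act_toR_smul (p : Param) (k : ℤ) (x : (ℤ × ℤ × ℤ) × (ℤ × ℤ × ℤ)) :
    act p (toR (k • x)) =
      ((p.1 ^ 2 * k) • rhoAct p.2.1 (p.2.2.2.1 / p.2.1) (1 / p.2.1) (toR x).1,
        (p.1 ^ 2 * k) • rhoAct p.2.2.1 (p.2.2.2.2 / p.2.2.1) (1 / p.2.2.1) (toR x).2) := by
  rw [← rhoAct_mul_smul, ← rhoAct_mul_smul]
  simp [act, toR, div_eq_mul_inv, mul_assoc]

theorem formDiscr_toR_fst (x : (ℤ × ℤ × ℤ) × (ℤ × ℤ × ℤ)) :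
    formDiscr (toR x).1 = (formDiscr x.1 : ℤ) := by
  simp [formDiscr, discrim, toR]

theorem formDiscr_toR_snd (x : Lset) : formDiscr (toR x).2 = (formDiscr x.1.1 : ℤ) := by
  have : formDiscr x.1.2 = formDiscr x.1.1 := x.2.1.symm
  rw [← this]
  simp [formDiscr, discrim, toR]

theorem one_le_abs_formDiscr (x : Lset) : 1 ≤ |((formDiscr x.1.1 : ℤ) : ℝ)| := by
  exact_mod_cast Int.one_le_abs (mul_ne_zero_iff.1 x.2.2).2

theorem HasRapidDecay.exists_norm_act_le {f : Vsp → ℂ} (hf : HasRapidDecay f) (σ₁ σ₂ : ℝ) (M : ℕ) :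
    ∃ C : ℝ, 0 ≤ C ∧ ∀ p ∈ ZplusDomain, ∀ (k : ℕ+) (x : Lset),
      ‖f (act p (toR ((k : ℤ) • x)))‖ ≤
        C * ((((p.1 ^ 2 * k) ^ 2 * |((formDiscr x.1.1 : ℤ) : ℝ)|) ^ (2 * M))⁻¹ *
          (((1 + p.2.1 ^ 2 * |(x.1.1.1 : ℝ)|) ^ (-σ₁) * shearWeight x.1.1.1 x.1.1.2.1 p.2.2.2.1) *
           ((1 + p.2.2.1 ^ 2 * |(x.1.2.1 : ℝ)|) ^ (-σ₂) *
              shearWeight x.1.2.1 x.1.2.2.1 p.2.2.2.2))) := by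
  obtain ⟨n₁, hn₁⟩ := exists_nat_ge σ₁
  obtain ⟨n₂, hn₂⟩ := exists_nat_ge σ₂
  obtain ⟨C, hC, hfC⟩ := hf.exists_norm_le_prod (2 * M + n₁ + 2) (2 * M + n₂ + 2)
  refine ⟨C * (5 ^ M * 5 ^ M), by positivity, ?_⟩
  rintro ⟨μ, t, s, u, v⟩ ⟨hμ, ht, hs, -, -⟩ k x
  have hl : 1 ≤ μ ^ 2 * ((k : ℤ) : ℝ) :=
    one_le_mul_of_one_le_of_one_le (one_le_pow₀ hμ) (by exact_mod_cast one_le (a := k))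
  have hD : ((formDiscr x.1.1 : ℤ) : ℝ) ≠ 0 :=
    abs_pos.1 (one_pos.trans_le (one_le_abs_formDiscr x))
  have h₁ := inv_one_add_norm_rhoAct_le (M := M) u (toR x).1 hl ht hn₁
    ((formDiscr_toR_fst x).trans_ne hD)
  have h₂ := inv_one_add_norm_rhoAct_le (M := M) v (toR x).2 hl hs hn₂
    ((formDiscr_toR_snd x).trans_ne hD)
  rw [formDiscr_toR_fst] at h₁
  rw [formDiscr_toR_snd] at h₂
  rw [act_toR_smul]
  grw [hfC, h₁, h₂]
  refine le_of_eq ?_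
  simp only [toR, shearWeight]
  rw [two_mul M, pow_add, mul_inv]
  push_cast
  ring

theorem mul_inv_sq_mul_abs_pow_le {lam k D : ℝ} (hlam : 0 < lam) (hk : 1 ≤ k) (hD : 1 ≤ |D|)
    {n : ℕ} (hn : 4 ≤ n) :
    k * (((lam * k) ^ 2 * |D|) ^ n)⁻¹ ≤ (k ^ 2)⁻¹ * ((D ^ 4)⁻¹ * (lam ^ (2 * n))⁻¹) := by
  have hkD : k ^ 3 * |D| ^ 4 ≤ (k ^ 2) ^ n * |D| ^ n := by
    rw [← pow_mul]
    exact mul_le_mul (pow_le_pow_right₀ hk (by lia)) (pow_le_pow_right₀ hD hn) (by positivity)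
      (by positivity)
  calc k * (((lam * k) ^ 2 * |D|) ^ n)⁻¹
      = k * ((k ^ 2) ^ n * |D| ^ n)⁻¹ * (lam ^ (2 * n))⁻¹ := by
        rw [pow_mul lam, ← mul_pow, mul_assoc, ← mul_inv, ← mul_pow]
        ring
    _ ≤ k * (k ^ 3 * |D| ^ 4)⁻¹ * (lam ^ (2 * n))⁻¹ := by gcongr
    _ = (k ^ 2)⁻¹ * ((D ^ 4)⁻¹ * (lam ^ (2 * n))⁻¹) := by
        rw [← Even.pow_abs (by decide) D]
        field_simp

theorem HasRapidDecay.exists_norm_zetaWeight_mul_le {f : Vsp → ℂ} (hf : HasRapidDecay f)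
    (s₁ s₂ w : ℂ) :
    ∃ κ < -1, ∃ C : ℝ, 0 ≤ C ∧ ∀ p ∈ ZplusDomain, ∀ (k : ℕ+) (x : Lset),
      ‖zetaWeight s₁ s₂ w p * ((k : ℂ) * f (act p (toR ((k : ℤ) • x))))‖ ≤
        C * (((k : ℝ) ^ 2)⁻¹ * ((((formDiscr x.1.1 : ℤ) : ℝ) ^ 4)⁻¹ *
          majorant κ s₁.re s₂.re x p)) := by
  -- `M` is so large that `μ` gets an exponent below `-1`, whatever `w` is.
  set ν := 2 * s₁.re + 2 * s₂.re + 4 * w.re - 1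
  obtain ⟨M, hM⟩ := exists_nat_gt (max 2 (ν + 1))
  have hM2 : 2 < M := by exact_mod_cast (le_max_left _ _).trans_lt hM
  have hMν : ν + 1 < M := (le_max_right _ _).trans_lt hM
  obtain ⟨C, hC, hfC⟩ := hf.exists_norm_act_le s₁.re s₂.re M
  refine ⟨ν - (2 * (2 * (2 * M)) : ℕ), by push_cast; linarith, C, hC, ?_⟩
  rintro ⟨μ, t, s, u, v⟩ hp k x
  obtain ⟨hμ, ht : 0 < t, hs : 0 < s, -, -⟩ := id hp
  have hμ0 : 0 < μ := zero_lt_one.trans_le hμ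
  have hscale := mul_inv_sq_mul_abs_pow_le (pow_pos hμ0 2)
    (show 1 ≤ (k : ℝ) by exact_mod_cast one_le (a := k)) (one_le_abs_formDiscr x)
    (show 4 ≤ 2 * M by lia)
  have hu := shearWeight_nonneg x.1.1.1 x.1.1.2.1 u
  have hv := shearWeight_nonneg x.1.2.1 x.1.2.2.1 v
  set T := t ^ (2 * s₁.re - 3) * s ^ (2 * s₂.re - 3) *
    (((1 + t ^ 2 * |(x.1.1.1 : ℝ)|) ^ (-s₁.re) * shearWeight x.1.1.1 x.1.1.2.1 u) *
      ((1 + s ^ 2 * |(x.1.2.1 : ℝ)|) ^ (-s₂.re) * shearWeight x.1.2.1 x.1.2.2.1 v)) with hT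
  calc _ = μ ^ ν * (t ^ (2 * s₁.re - 3) * s ^ (2 * s₂.re - 3)) *
        (k * ‖f (act (μ, t, s, u, v) (toR ((k : ℤ) • x)))‖) := by
        rw [norm_mul, norm_mul, norm_zetaWeight s₁ s₂ w hμ0 ht hs, Complex.norm_natCast]
    _ ≤ C * (μ ^ ν * T) *
        (k * (((μ ^ 2 * k) ^ 2 * |((formDiscr x.1.1 : ℤ) : ℝ)|) ^ (2 * M))⁻¹) := by
        grw [hfC _ hp k x]
        exact le_of_eq (by rw [hT]; ring)
    _ ≤ C * (μ ^ ν * T) * (((k : ℝ) ^ 2)⁻¹ * ((((formDiscr x.1.1 : ℤ) : ℝ) ^ 4)⁻¹ *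
        ((μ ^ 2) ^ (2 * (2 * M)))⁻¹)) := by grw [hscale]
    _ = _ := by
        rw [majorant, torusWeight, torusWeight, Real.rpow_sub_natCast hμ0.ne', pow_mul μ 2, hT]
        ring

theorem HasRapidDecay.exists_enorm_Zintegrand_le {f : Vsp → ℂ} (hf : HasRapidDecay f)
    (s₁ s₂ w : ℂ) :
    ∃ κ < -1, ∃ C : ℝ, ∀ p ∈ ZplusDomain, ‖Zintegrand f s₁ s₂ w p‖ₑ ≤
      ENNReal.ofReal C * ∑' (k : ℕ+) (x : Lset), ENNReal.ofReal ((k : ℝ) ^ 2)⁻¹ *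
        (ENNReal.ofReal (((formDiscr x.1.1 : ℤ) : ℝ) ^ 4)⁻¹ *
          ENNReal.ofReal (majorant κ s₁.re s₂.re x p)) := by
  obtain ⟨κ, hκ, C, hC, hterm⟩ := hf.exists_norm_zetaWeight_mul_le s₁ s₂ w
  refine ⟨κ, hκ, C, fun p hp ↦ ?_⟩
  rw [Zintegrand_eq_zetaWeight_mul, latticeSum, enorm_mul]
  grw [enorm_tsum_le_tsum_enorm]
  simp_rw [← ENNReal.tsum_mul_left]
  refine ENNReal.tsum_le_tsum fun k ↦ ?_
  grw [enorm_tsum_le_tsum_enorm]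
  rw [← ENNReal.tsum_mul_left]
  refine ENNReal.tsum_le_tsum fun x ↦ ?_
  rw [← enorm_mul, ← ofReal_norm, ← ENNReal.ofReal_mul (by positivity),
    ← ENNReal.ofReal_mul (by positivity), ← ENNReal.ofReal_mul hC]
  exact ENNReal.ofReal_le_ofReal (hterm p hp k x)

end Integrand

theorem stmt15_general (f : Vsp → ℂ) (hf : Measurable f) (hdecay : HasRapidDecay f)
    (s₁ s₂ w : ℂ) (h1 : 1 < s₁.re) (h2 : 1 < s₂.re) :
    IntegrableOn (Zintegrand f s₁ s₂ w) ZplusDomain volume := by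
  obtain ⟨κ, hκ, C, hbound⟩ := hdecay.exists_enorm_Zintegrand_le s₁ s₂ w
  refine ⟨(measurable_Zintegrand hf s₁ s₂ w).aestronglyMeasurable, ?_⟩
  refine hasFiniteIntegral_iff_enorm.2 ?_
  grw [setLIntegral_mono' measurableSet_ZplusDomain hbound]
  rw [lintegral_const_mul' _ _ ENNReal.ofReal_ne_top]
  exact ENNReal.mul_lt_top ENNReal.ofReal_lt_top (setLIntegral_tsum_majorant_lt_top hκ h1 h2)

theorem stmt15 (f : SchwartzMap Vsp ℂ)
    (hf : ∀ x y : ℝ × ℝ × ℝ, f (-x, y) = f (x, y) ∧ f (x, -y) = f (x, y))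
    (s₁ s₂ w : ℂ) (h1 : 1 < s₁.re) (h2 : 1 < s₂.re) :
    IntegrableOn (Zintegrand (⇑f) s₁ s₂ w) ZplusDomain volume :=
  stmt15_general f f.continuous.measurable (hasRapidDecay_schwartzMap f) s₁ s₂ w h1 h2
end
end
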